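/- arXiv:1406.0157 — 9 statements merged into one kernel-verified Lean document; each statement's English description precedes it below -/
import Mathlib

section
/- Let k ≥ 1 and n ≥ 1 be integers, and let W ⊆ (ZMod 2)^k be a set of nonzero vectors with |W| ≥ 2n². Then the number of vectors R ∈ (ZMod 2)^k that (1/(2√n))-split W is strictly greater than 2^k·(1 − 1/(2n)). -/
/-!
Write `χ` for the sign character of `ZMod 2` and `F R = ∑ s ∈ W, χ ⟨R, s⟩`, so that
`F R = |W| - 2 |{s ∈ W : ⟨R, s⟩ = 1}|`. Orthogonality of characters (`sum_sgn_ip`), which is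
the pairwise independence of the bits `⟨R, s⟩`, gives the second moment
`∑ R, F R ^ 2 = 2 ^ k * |W|` (`second_moment`). If `R` does not split `W`, then
`F R ^ 2 > |W| ^ 2 / n`, so by Chebyshev's argument fewer than `2 ^ k * n / |W| ≤ 2 ^ k / (2 n)`
vectors fail to split `W` (or none fails, and the bound is trivially strict).
-/

open Finset

/-- Inner product over GF(2). -/
def ip {k : ℕ} (R s : Fin k → ZMod 2) : ZMod 2 := ∑ i, R i * s i

/-- `R` ε-splits the finite set `S`. -/
def splits {k : ℕ} (ε : ℝ) (R : Fin k → ZMod 2) (S : Finset (Fin k → ZMod 2)) : Prop :=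
  (1 / 2 - ε) * (S.card : ℝ) ≤ ((S.filter fun s => ip R s = 1).card : ℝ) ∧
  ((S.filter fun s => ip R s = 1).card : ℝ) ≤ (1 / 2 + ε) * (S.card : ℝ)

/-- The nontrivial character of `ZMod 2`, with real values. -/
def sgn (x : ZMod 2) : ℝ := if x = 1 then -1 else 1

lemma sgn_add (x y : ZMod 2) : sgn (x + y) = sgn x * sgn y := by
  have h : ∀ z : ZMod 2, z = 0 ∨ z = 1 := by decide
  have h2 : (1 + 1 : ZMod 2) = 0 := by decide
  rcases h x with rfl | rfl <;> rcases h y with rfl | rfl <;> simp [sgn, h2]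

lemma ip_add_right {k : ℕ} (R s t : Fin k → ZMod 2) : ip R (s + t) = ip R s + ip R t := by
  simp [ip, mul_add, Finset.sum_add_distrib]

lemma ip_add_left {k : ℕ} (R S t : Fin k → ZMod 2) : ip (R + S) t = ip R t + ip S t := by
  simp [ip, add_mul, Finset.sum_add_distrib]

/-- Orthogonality: translating `R` by a basis vector at a nonzero coordinate of `u` flips every
sign. -/
lemma sum_sgn_ip {k : ℕ} (u : Fin k → ZMod 2) (hu : u ≠ 0) :
    ∑ R : Fin k → ZMod 2, sgn (ip R u) = 0 := by
  obtain ⟨i, hi⟩ := Function.ne_iff.mp hu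
  have h1 : u i = 1 := (by decide : ∀ z : ZMod 2, z ≠ 0 → z = 1) _ hi
  have he : ip (Pi.single i 1) u = 1 := by
    simp [ip, Pi.single_apply, h1]
  have h := Equiv.sum_comp (Equiv.addRight (Pi.single i 1 : Fin k → ZMod 2))
    (fun R => sgn (ip R u))
  simp only [Equiv.coe_addRight, ip_add_left, sgn_add, he] at h
  have hs : sgn 1 = -1 := by simp [sgn]
  rw [← Finset.sum_mul, hs] at h
  linarith

lemma second_moment {k : ℕ} (W : Finset (Fin k → ZMod 2)) :
    ∑ R : Fin k → ZMod 2, (∑ s ∈ W, sgn (ip R s)) ^ 2 = 2 ^ k * (W.card : ℝ) := by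
  have key : ∀ s t : Fin k → ZMod 2,
      ∑ R : Fin k → ZMod 2, sgn (ip R s) * sgn (ip R t) = if s = t then 2 ^ k else 0 := by
    intro s t
    simp only [← sgn_add, ← ip_add_right]
    split_ifs with h
    · subst h
      have : s + s = 0 := funext fun i => CharTwo.add_self_eq_zero (s i)
      rw [this]
      simp [ip, sgn, ZMod.card]
    · apply sum_sgn_ip
      intro h0
      exact h (funext fun i => CharTwo.add_eq_zero.mp (congrFun h0 i))
  simp only [sq, Finset.sum_mul_sum]
  rw [Finset.sum_comm]
  simp_rw [Finset.sum_comm (s := Finset.univ) (t := W), key]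
  simp [mul_comm]

lemma sum_sgn_eq {k : ℕ} (R : Fin k → ZMod 2) (W : Finset (Fin k → ZMod 2)) :
    ∑ s ∈ W, sgn (ip R s) = W.card - 2 * ((W.filter fun s => ip R s = 1).card : ℝ) := by
  have h : ∀ x : ZMod 2, sgn x = 1 - 2 * (if x = 1 then 1 else 0) := by
    intro x
    unfold sgn
    split_ifs <;> norm_num
  simp only [h, Finset.sum_sub_distrib, ← Finset.mul_sum]
  simp

/-- A vector that does not `1 / (2 √n)`-split `W` has a large character sum over `W`. -/
lemma lt_sq_of_not_splits {k n : ℕ} (hn : 1 ≤ n) (R : Fin k → ZMod 2)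
    (W : Finset (Fin k → ZMod 2)) (h : ¬ splits (1 / (2 * Real.sqrt n)) R W) :
    (W.card : ℝ) ^ 2 / n < (∑ s ∈ W, sgn (ip R s)) ^ 2 := by
  have hn' : (0 : ℝ) < n := by exact_mod_cast hn
  have hs := Real.sqrt_pos.mpr hn'
  have e : (W.card : ℝ) ^ 2 / n = (W.card / Real.sqrt n) ^ 2 := by
    rw [div_pow, Real.sq_sqrt hn'.le]
  have e2 : 1 / (2 * Real.sqrt n) * (W.card : ℝ) = (W.card / Real.sqrt n) / 2 := by
    field_simp
  rw [e, sum_sgn_eq, sq_lt_sq, abs_of_nonneg (by positivity : 0 ≤ (W.card : ℝ) / Real.sqrt n)]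
  by_contra hc
  obtain ⟨h1, h2⟩ := abs_le.mp (not_lt.mp hc)
  apply h
  constructor
  · rw [sub_mul, e2]; linarith
  · rw [add_mul, e2]; linarith

open scoped Classical in
theorem stmt0 (k n : ℕ) (hk : 1 ≤ k) (hn : 1 ≤ n)
    (W : Finset (Fin k → ZMod 2)) (hW0 : ∀ s ∈ W, s ≠ 0)
    (hWcard : 2 * n ^ 2 ≤ W.card) :
    (2 : ℝ) ^ k * (1 - 1 / (2 * n)) <
      ((Finset.univ.filter fun R : Fin k → ZMod 2 =>
        splits (1 / (2 * Real.sqrt n)) R W).card : ℝ) := by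
  have hn' : (0 : ℝ) < n := by exact_mod_cast hn
  have hm : (2 : ℝ) * n ^ 2 ≤ W.card := by exact_mod_cast hWcard
  have hm0 : (0 : ℝ) < W.card := lt_of_lt_of_le (by positivity) hm
  set B := Finset.univ.filter fun R : Fin k → ZMod 2 => ¬ splits (1 / (2 * Real.sqrt n)) R W
    with hB
  have htot := Finset.card_filter_add_card_filter_not
    (s := (Finset.univ : Finset (Fin k → ZMod 2)))
    (fun R => splits (1 / (2 * Real.sqrt n)) R W)
  rw [← hB] at htot
  have htot' : ((Finset.univ.filter fun R : Fin k → ZMod 2 =>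
      splits (1 / (2 * Real.sqrt n)) R W).card : ℝ) + B.card = 2 ^ k := by
    rw [← Nat.cast_add, htot]
    simp [ZMod.card]
  have hbound : (B.card : ℝ) < 2 ^ k * (1 / (2 * n)) := by
    rcases B.eq_empty_or_nonempty with h0 | h0
    · rw [h0]
      simp only [Finset.card_empty, Nat.cast_zero]
      positivity
    · have h1 : (B.card : ℝ) * ((W.card : ℝ) ^ 2 / n) < 2 ^ k * (W.card : ℝ) := by
        rw [← second_moment W, ← nsmul_eq_mul, ← Finset.sum_const]
        refine lt_of_lt_of_le (Finset.sum_lt_sum_of_nonempty h0 fun R hR =>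
          lt_sq_of_not_splits hn R W (Finset.mem_filter.mp hR).2) ?_
        exact Finset.sum_le_univ_sum_of_nonneg fun R => sq_nonneg _
      have h2 : (B.card : ℝ) * (W.card / n) < 2 ^ k := by
        refine lt_of_mul_lt_mul_right ?_ hm0.le
        calc (B.card : ℝ) * (W.card / n) * W.card = B.card * ((W.card : ℝ) ^ 2 / n) := by ring
          _ < _ := h1
      have h3 : (2 : ℝ) * n ≤ W.card / n := by
        rw [le_div_iff₀ hn']; linarith
      rw [mul_one_div, lt_div_iff₀ (by positivity)]
      exact lt_of_le_of_lt (mul_le_mul_of_nonneg_left h3 (Nat.cast_nonneg _)) h2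
  rw [mul_sub, mul_one]
  linarith
end

section
/- Let k ∈ ℕ and let a : ℕ × ℕ → ℝ be a nonnegative function such that a(i, 0) ≤ C(k, i) for every i, a(0, t) = 0 for every t, and a(i, t+1) ≤ (2/3)·(a(i−1, t) + a(i, t)) for all i ≥ 1 and all t. Then a(i, t) ≤ (2/3)^t · C(k+t, i) for all i and t, where C(·,·) denotes the binomial coefficient. -/
theorem stmt3 (k : ℕ) (a : ℕ → ℕ → ℝ)
    (hnonneg : ∀ i t, 0 ≤ a i t)
    (hinit : ∀ i, a i 0 ≤ (k.choose i : ℝ))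
    (hzero : ∀ t, a 0 t = 0)
    (hrec : ∀ i t, 1 ≤ i → a i (t + 1) ≤ (2 / 3) * (a (i - 1) t + a i t)) :
    ∀ i t, a i t ≤ (2 / 3 : ℝ) ^ t * ((k + t).choose i : ℝ) := by
  -- Induction on `t`, for all `i` at once; the recurrence matches Pascal's rule.
  intro i t
  induction t generalizing i with
  | zero => simpa using hinit i
  | succ t ih =>
    cases i with
    | zero =>
      rw [hzero]
      positivity
    | succ j =>
      have h := hrec (j + 1) t (Nat.le_add_left 1 j)
      rw [Nat.add_sub_cancel] at h
      calc a (j + 1) (t + 1) ≤ 2 / 3 * (a j t + a (j + 1) t) := h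
        _ ≤ 2 / 3 * ((2 / 3 : ℝ) ^ t * ((k + t).choose j : ℝ)
              + (2 / 3 : ℝ) ^ t * ((k + t).choose (j + 1) : ℝ)) := by
            gcongr
            · exact ih j
            · exact ih (j + 1)
        _ = (2 / 3 : ℝ) ^ (t + 1) * ((k + (t + 1)).choose (j + 1) : ℝ) := by
            rw [← Nat.add_assoc, Nat.choose_succ_succ', pow_succ]
            push_cast
            ring
end

section
/- Let k ≥ 1 be an integer and let b : ℕ × ℕ → ℝ be a nonnegative function (b(i,n) defined for n ≥ k) such that b(i, k) ≤ C(k, i) for every i, b(0, n) = 0 for every n ≥ k, and for every n ≥ k and every i ≥ 1, b(i, n+1) ≤ (1 + 1/√n)·(1/2)·(b(i−1, n) + b(i, n)). Then for every n ≥ k and every i, b(i, n) ≤ C(n, i)·2^(k−n)·∏_{j=k}^{n−1} (1 + 1/√j), where C(·,·) denotes the binomial coefficient. -/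
/-! Induction on `n`. The bound `C(n,i) 2^(k-n) ∏ (1 + 1/√j)` satisfies the recurrence assumed of `b`
with equality, by Pascal's rule, so it dominates `b` from `n = k` on; the class `i = 0`, which the
recurrence does not cover, is trivial because `b 0 n = 0`. -/

theorem stmt4 (k : ℕ) (hk : 1 ≤ k) (b : ℕ → ℕ → ℝ)
    (hnonneg : ∀ i n, 0 ≤ b i n)
    (hinit : ∀ i, b i k ≤ (k.choose i : ℝ))
    (hzero : ∀ n, k ≤ n → b 0 n = 0)
    (hrec : ∀ i n, k ≤ n → 1 ≤ i →
      b i (n + 1) ≤ (1 + 1 / Real.sqrt n) * (1 / 2) * (b (i - 1) n + b i n)) :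
    ∀ n, k ≤ n → ∀ i,
      b i n ≤ (n.choose i : ℝ) * (2 : ℝ) ^ ((k : ℤ) - (n : ℤ)) *
        ∏ j ∈ Finset.Ico k n, (1 + 1 / Real.sqrt j) := by
  intro n hn
  induction n, hn using Nat.le_induction with
  | base => intro i; simpa using hinit i
  | succ n hn ih =>
    intro i
    rcases i with _ | i
    · rw [hzero (n + 1) (by omega)]
      positivity
    · have hpow : (2 : ℝ) ^ ((k : ℤ) - ((n + 1 : ℕ) : ℤ))
          = (2 : ℝ) ^ ((k : ℤ) - (n : ℤ)) * (1 / 2) := by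
        rw [show (k : ℤ) - ((n + 1 : ℕ) : ℤ) = ((k : ℤ) - (n : ℤ)) - 1 by push_cast; ring,
          zpow_sub_one₀ (by norm_num)]
        norm_num
      rw [hpow, Finset.prod_Ico_succ_top hn, Nat.choose_succ_succ', Nat.cast_add]
      have hstep := hrec (i + 1) n hn (by omega)
      rw [Nat.add_sub_cancel] at hstep
      refine hstep.trans ((mul_le_mul_of_nonneg_left (add_le_add (ih i) (ih (i + 1)))
        (by positivity)).trans_eq ?_)
      ring
end

section
/- Let p be a real number with 0 < p < 1/2 and let i ≥ 1 be an integer. Then Σ_{j=⌈i/2⌉}^{i} C(i, j)·p^j·(1−p)^{i−j} ≤ (4p(1−p))^{i/2}; equivalently, this sum is at most 2^{−β·i} where β = −(1/2)·log₂(4p(1−p)) > 0. -/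
/-!
This is the Bhattacharyya bound. Since `p ≤ 1 - p`, moving factors from `p` to `1 - p` only increases
a product, so `p ^ j * (1 - p) ^ (i - j) ≤ √(p (1 - p)) ^ i` as soon as `j ≥ i / 2`
(`pow_mul_pow_le_sqrt_pow`). The binomial coefficients sum to at most `2 ^ i`, and
`2 ^ i * √(p (1 - p)) ^ i = (4 p (1 - p)) ^ (i / 2)`.
-/

lemma pow_mul_pow_le_sqrt_pow {p q : ℝ} (hp : 0 ≤ p) (hpq : p ≤ q) {i j : ℕ}
    (hj : i ≤ 2 * j) (hji : j ≤ i) : p ^ j * q ^ (i - j) ≤ √(p * q) ^ i := by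
  have hq : 0 ≤ q := hp.trans hpq
  refine le_of_pow_le_pow_left₀ two_ne_zero (by positivity) ?_
  obtain ⟨k, hk⟩ := Nat.exists_eq_add_of_le hj
  obtain ⟨m, rfl⟩ := Nat.exists_eq_add_of_le hji
  -- With `i = j + m` and `j = m + k`, both squares share the factor `p ^ i * q ^ (2 * m)`.
  obtain rfl : j = m + k := by omega
  have hpow : p ^ k ≤ q ^ k := pow_le_pow_left₀ hp hpq k
  rw [← pow_mul, mul_comm (m + k + m) 2, pow_mul, Real.sq_sqrt (by positivity),
    Nat.add_sub_cancel_left]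
  calc (p ^ (m + k) * q ^ m) ^ 2 = p ^ (m + k + m) * q ^ (2 * m) * p ^ k := by ring
    _ ≤ p ^ (m + k + m) * q ^ (2 * m) * q ^ k := by gcongr
    _ = (p * q) ^ (m + k + m) := by ring

theorem stmt6 (p : ℝ) (hp0 : 0 < p) (hp1 : p < 1 / 2) (i : ℕ) (hi : 1 ≤ i) :
    ∑ j ∈ Finset.Icc ((i + 1) / 2) i, (i.choose j : ℝ) * p ^ j * (1 - p) ^ (i - j) ≤
      (4 * p * (1 - p)) ^ ((i : ℝ) / 2) := by
  have hq : 0 < 1 - p := by linarith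
  have hsqrt : √(4 * p * (1 - p)) = 2 * √(p * (1 - p)) := by
    rw [show 4 * p * (1 - p) = 2 ^ 2 * (p * (1 - p)) by ring,
      Real.sqrt_mul (by positivity), Real.sqrt_sq (by norm_num)]
  have hrhs : (4 * p * (1 - p)) ^ ((i : ℝ) / 2) = 2 ^ i * √(p * (1 - p)) ^ i := by
    rw [Real.rpow_div_two_eq_sqrt _ (by positivity), Real.rpow_natCast, hsqrt, mul_pow]
  have hchoose : ∑ j ∈ Finset.Icc ((i + 1) / 2) i, (i.choose j : ℝ) ≤ 2 ^ i := by
    have hsub : Finset.Icc ((i + 1) / 2) i ⊆ Finset.range (i + 1) := fun j hj => by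
      simp only [Finset.mem_Icc, Finset.mem_range] at hj ⊢
      omega
    have h := Finset.sum_le_sum_of_subset (f := fun j => i.choose j) hsub
    rw [Nat.sum_range_choose] at h
    exact_mod_cast h
  calc ∑ j ∈ Finset.Icc ((i + 1) / 2) i, (i.choose j : ℝ) * p ^ j * (1 - p) ^ (i - j)
      ≤ ∑ j ∈ Finset.Icc ((i + 1) / 2) i, (i.choose j : ℝ) * √(p * (1 - p)) ^ i := by
        refine Finset.sum_le_sum fun j hj => ?_
        rw [Finset.mem_Icc] at hj
        rw [mul_assoc]
        exact mul_le_mul_of_nonneg_left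
          (pow_mul_pow_le_sqrt_pow hp0.le (by linarith) (by omega) hj.2) (by positivity)
    _ = (∑ j ∈ Finset.Icc ((i + 1) / 2) i, (i.choose j : ℝ)) * √(p * (1 - p)) ^ i := by
        rw [Finset.sum_mul]
    _ ≤ 2 ^ i * √(p * (1 - p)) ^ i := by gcongr
    _ = (4 * p * (1 - p)) ^ ((i : ℝ) / 2) := hrhs.symm
end

section
/- Let c ∈ (ZMod 2)^n have Hamming weight wt(c) = i, and let r ≤ n be a natural number. Then |{y ∈ (ZMod 2)^n : wt(y) = r and dist(y, c) ≤ r}| = Σ_{w=⌈i/2⌉}^{r} C(i, w)·C(n−i, r−w), where C(·,·) denotes the binomial coefficient. -/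
/-!
If `y` has weight `r` and `w` ones inside the support of `c`, then
`wt (y - c) = r + i - 2 * w` (`wt_sub_add`), so `wt (y - c) ≤ r` means exactly `⌈i/2⌉ ≤ w`;
moreover `w ≤ r` always holds. The vectors with a given `w` correspond to pairs consisting of
a `w`-subset of the support of `c` and an `(r - w)`-subset of its complement (`card_fiber`), and
summing over `w` gives the formula.
-/

open Finset

/-- Hamming weight of a binary vector. -/
def wt {n : ℕ} (x : Fin n → ZMod 2) : ℕ := (Finset.univ.filter fun j => x j = 1).card

/-- The support of a binary vector, as the set of positions of its ones. -/
def oneSet {n : ℕ} (x : Fin n → ZMod 2) : Finset (Fin n) := Finset.univ.filter fun j => x j = 1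

lemma mem_oneSet {n : ℕ} (x : Fin n → ZMod 2) (j : Fin n) : j ∈ oneSet x ↔ x j = 1 := by
  simp [oneSet]

lemma wt_eq_card_oneSet {n : ℕ} (x : Fin n → ZMod 2) : wt x = (oneSet x).card := rfl

/-- Every position set is the support of its indicator vector. -/
lemma oneSet_indicator {n : ℕ} (S : Finset (Fin n)) :
    oneSet (fun j => if j ∈ S then (1 : ZMod 2) else 0) = S := by
  ext j
  simp [mem_oneSet]

lemma indicator_oneSet {n : ℕ} (y : Fin n → ZMod 2) :
    (fun j => if j ∈ oneSet y then (1 : ZMod 2) else 0) = y := by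
  funext j
  simp only [mem_oneSet]
  generalize y j = a
  revert a
  decide

/-- The inclusion–exclusion count behind `wt (y - c) = wt y + wt c - 2 * w`, written without
truncated subtraction. -/
lemma wt_sub_add {n : ℕ} (y c : Fin n → ZMod 2) :
    wt (y - c) + 2 * (oneSet y ∩ oneSet c).card = wt y + wt c := by
  have hinter : oneSet y ∩ oneSet c = Finset.univ.filter fun j => y j = 1 ∧ c j = 1 := by
    ext j
    simp [mem_oneSet]
  rw [hinter]
  simp only [wt, Finset.card_filter, Finset.mul_sum, ← Finset.sum_add_distrib, Pi.sub_apply]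
  refine Finset.sum_congr rfl fun j _ => ?_
  generalize y j = a
  generalize c j = b
  revert a b
  decide

/-- A vector of weight `r` with `w` ones inside `C` is a choice of `w` positions in `C` and
`r - w` positions outside `C`. -/
lemma card_fiber {n r w : ℕ} (C : Finset (Fin n)) (hw : w ≤ r) :
    (Finset.univ.filter fun y : Fin n → ZMod 2 => wt y = r ∧ (oneSet y ∩ C).card = w).card =
      C.card.choose w * (n - C.card).choose (r - w) := by
  have hcompl : n - C.card = Cᶜ.card := by simp [Finset.card_compl]
  rw [hcompl, ← Finset.card_powersetCard, ← Finset.card_powersetCard, ← Finset.card_product]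
  refine Finset.card_nbij' (fun y => (oneSet y ∩ C, oneSet y \ C))
    (fun p j => if j ∈ p.1 ∪ p.2 then 1 else 0) ?_ ?_ ?_ ?_
  · intro y hy
    simp only [Finset.coe_filter, Finset.mem_univ, true_and, Set.mem_ofPred_eq] at hy
    rw [wt_eq_card_oneSet] at hy
    have hsplit := Finset.card_inter_add_card_sdiff (oneSet y) C
    simp only [Finset.mem_coe, Finset.mem_product, Finset.mem_powersetCard]
    refine ⟨⟨Finset.inter_subset_right, hy.2⟩, fun j hj => ?_, by omega⟩
    simp only [Finset.mem_sdiff] at hj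
    simpa using hj.2
  · rintro ⟨A, B⟩ hp
    simp only [Finset.mem_coe, Finset.mem_product, Finset.mem_powersetCard] at hp
    obtain ⟨⟨hA, hAw⟩, hB, hBw⟩ := hp
    have hBC : Disjoint B C := Finset.subset_compl_iff_disjoint_right.mp hB
    have hAB : Disjoint A B := (hBC.mono_right hA).symm
    simp only [Finset.coe_filter, Finset.mem_univ, true_and, Set.mem_ofPred_eq]
    simp only [wt_eq_card_oneSet, oneSet_indicator]
    rw [Finset.card_union_of_disjoint hAB, Finset.union_inter_distrib_right,
      Finset.inter_eq_left.mpr hA, Finset.disjoint_iff_inter_eq_empty.mp hBC, Finset.union_empty]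
    omega
  · intro y _
    simp only [Finset.union_comm (oneSet y ∩ C), Finset.sdiff_union_inter, indicator_oneSet]
  · rintro ⟨A, B⟩ hp
    simp only [Finset.mem_coe, Finset.mem_product, Finset.mem_powersetCard] at hp
    obtain ⟨⟨hA, -⟩, hB, -⟩ := hp
    have hBC : ∀ j ∈ B, j ∉ C := fun j hj => by simpa using hB hj
    simp only [oneSet_indicator, Prod.mk.injEq]
    constructor <;> ext j <;> grind

theorem stmt9 (n i r : ℕ) (c : Fin n → ZMod 2) (hc : wt c = i) (hr : r ≤ n) :
    (Finset.univ.filter fun y : Fin n → ZMod 2 => wt y = r ∧ wt (y - c) ≤ r).card =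
      ∑ w ∈ Finset.Icc ((i + 1) / 2) r, i.choose w * (n - i).choose (r - w) := by
  rw [Finset.card_eq_sum_card_fiberwise (f := fun y => (oneSet y ∩ oneSet c).card)
    (t := Finset.Icc ((i + 1) / 2) r)]
  · refine Finset.sum_congr rfl fun w hw => ?_
    rw [Finset.mem_Icc] at hw
    have hfib := card_fiber (oneSet c) hw.2
    rw [← wt_eq_card_oneSet, hc] at hfib
    rw [← hfib, Finset.filter_filter]
    congr 1
    ext y
    have hdist := wt_sub_add y c
    simp only [Finset.mem_filter, Finset.mem_univ, true_and]
    omega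
  · intro y hy
    simp only [Finset.coe_filter, Finset.mem_univ, true_and, Set.mem_ofPred_eq] at hy
    have hdist := wt_sub_add y c
    have hle : (oneSet y ∩ oneSet c).card ≤ wt y := Finset.card_le_card Finset.inter_subset_left
    simp only [Finset.coe_Icc, Set.mem_Icc]
    omega
end

section
/- Let a, b be real numbers with 0 < a ≤ b, let f(x) = binom(a,x)·binom(b,x), and let t = (ab − 1)/(a + b + 2). Then for every real x with 0 ≤ x ≤ a − 1: if x ≤ t then f(x) ≤ f(x+1), and if x ≥ t then f(x) ≥ f(x+1). -/
/-! Since `binom(a,x+1) = (a-x)/(x+1) * binom(a,x)`, the product satisfies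
`f (x+1) = (a-x)(b-x)/(x+1)² * f x` with `f x > 0`. Comparing `f x` with `f (x+1)` thus amounts to
comparing `(x+1)²` with `(a-x)(b-x)`, and `(a-x)(b-x) - (x+1)² = (ab - 1) - (a+b+2) x`,
which changes sign at `x = t`. -/

/-- Binomial coefficient extended to real arguments via the Gamma function. -/
noncomputable def rbinom (a x : ℝ) : ℝ :=
  Real.Gamma (a + 1) / (Real.Gamma (x + 1) * Real.Gamma (a - x + 1))

lemma rbinom_pos {a x : ℝ} (hx : 0 ≤ x) (hxa : x ≤ a) : 0 < rbinom a x := by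
  unfold rbinom
  have h1 := Real.Gamma_pos_of_pos (show 0 < a + 1 by linarith)
  have h2 := Real.Gamma_pos_of_pos (show 0 < x + 1 by linarith)
  have h3 := Real.Gamma_pos_of_pos (show 0 < a - x + 1 by linarith)
  positivity

lemma rbinom_succ {a x : ℝ} (hx : 0 ≤ x) (hxa : x < a) :
    rbinom a (x + 1) = (a - x) / (x + 1) * rbinom a x := by
  unfold rbinom
  have hx1 : 0 < x + 1 := by linarith
  have hax : 0 < a - x := by linarith
  have h2 := Real.Gamma_pos_of_pos hx1
  have h3 := Real.Gamma_pos_of_pos hax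
  rw [Real.Gamma_add_one hx1.ne', Real.Gamma_add_one hax.ne',
    show a - (x + 1) + 1 = a - x by ring]
  field_simp

theorem stmt11 (a b : ℝ) (ha : 0 < a) (hab : a ≤ b)
    (f : ℝ → ℝ) (hf : ∀ x, f x = rbinom a x * rbinom b x)
    (t : ℝ) (ht : t = (a * b - 1) / (a + b + 2)) :
    ∀ x : ℝ, 0 ≤ x → x ≤ a - 1 →
      (x ≤ t → f x ≤ f (x + 1)) ∧ (t ≤ x → f (x + 1) ≤ f x) := by
  intro x hx hxa
  have hs : 0 < a + b + 2 := by linarith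
  have hfx : 0 < f x := by
    rw [hf]
    exact mul_pos (rbinom_pos hx (by linarith)) (rbinom_pos hx (by linarith))
  have hsucc : f (x + 1) = (a - x) * (b - x) / (x + 1) ^ 2 * f x := by
    rw [hf, hf, rbinom_succ hx (by linarith), rbinom_succ hx (by linarith)]
    field_simp
  have hx2 : 0 < (x + 1) ^ 2 := by positivity
  rw [hsucc, ht]
  constructor
  · intro h
    rw [le_div_iff₀ hs] at h
    refine le_mul_of_one_le_left hfx.le ?_
    rw [one_le_div hx2]
    linarith
  · intro h
    rw [div_le_iff₀ hs] at h
    refine mul_le_of_le_one_left hfx.le ?_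
    rw [div_le_one hx2]
    linarith
end

section
/- Let a, b be real numbers with 0 < a ≤ b and a² ≥ a + b, and let f(x) = binom(a,x)·binom(b,x). Then for every x ∈ [0, a], f(x) ≤ f(ab/(a+b)) · (ab)⁴/(a+b)⁴. -/
/-- The logarithm of the generalized factorial `Γ(z+1)`. -/
noncomputable def logFact (z : ℝ) : ℝ := Real.log (Real.Gamma (z + 1))

lemma logFact_comb {u v s t : ℝ} (hu : 0 ≤ u) (hv : 0 ≤ v) (hs : 0 ≤ s) (ht : 0 ≤ t)
    (hst : s + t = 1) : logFact (s * u + t * v) ≤ s * logFact u + t * logFact v := by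
  have h := Real.convexOn_log_Gamma.2 (x := u + 1) (y := v + 1)
    (Set.mem_Ioi.2 (by linarith)) (Set.mem_Ioi.2 (by linarith)) hs ht hst
  simp only [smul_eq_mul, Function.comp_apply] at h
  have e : s * (u + 1) + t * (v + 1) = s * u + t * v + 1 := by linear_combination hst
  rw [e] at h
  exact h

lemma logFact_succ {z : ℝ} (hz : 0 ≤ z) :
    logFact (z + 1) = logFact z + Real.log (z + 1) := by
  unfold logFact
  rw [Real.Gamma_add_one (s := z + 1) (by linarith), Real.log_mul (by linarith)
    (Real.Gamma_pos_of_pos (by linarith)).ne', add_comm]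

/-- Increments of `logFact` over steps of a fixed length increase with the base point. -/
lemma logFact_incr {u v t : ℝ} (hu : 0 ≤ u) (huv : u ≤ v) (ht : 0 ≤ t) :
    logFact (u + t) - logFact u ≤ logFact (v + t) - logFact v := by
  rcases ht.eq_or_lt with rfl | ht
  · simp
  -- `u + t` and `v` are convex combinations of `u` and `v + t` with swapped weights.
  have hD : 0 < v + t - u := by linarith
  have hs : 0 ≤ (v - u) / (v + t - u) := div_nonneg (by linarith) hD.le
  have hw : 0 ≤ t / (v + t - u) := div_nonneg ht.le hD.le
  have hsum : (v - u) / (v + t - u) + t / (v + t - u) = 1 := by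
    field_simp; ring
  have h1 := logFact_comb hu (v := v + t) (by linarith) hs hw hsum
  have h2 := logFact_comb hu (v := v + t) (by linarith) hw hs (by linarith)
  have e1 : (v - u) / (v + t - u) * u + t / (v + t - u) * (v + t) = u + t := by
    field_simp; ring
  have e2 : t / (v + t - u) * u + (v - u) / (v + t - u) * (v + t) = v := by
    field_simp; ring
  rw [e1] at h1
  rw [e2] at h2
  have e3 : (v - u) / (v + t - u) = 1 - t / (v + t - u) := by linarith
  rw [e3] at h1 h2
  linarith

/-- Secant slopes over a step of length at least `1` dominate that of the unit step. -/
lemma logFact_forward {z e : ℝ} (hz : 0 ≤ z) (he : 1 ≤ e) :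
    e * Real.log (z + 1) ≤ logFact (z + e) - logFact z := by
  have he0 : 0 < e := by linarith
  have hi : 1 / e ≤ 1 := by rw [div_le_one he0]; exact he
  have h := logFact_comb hz (v := z + e) (by linarith) (s := 1 - 1 / e) (t := 1 / e)
    (by linarith) (by positivity) (by ring)
  have e1 : (1 - 1 / e) * z + 1 / e * (z + e) = z + 1 := by field_simp; ring
  rw [e1, logFact_succ hz] at h
  have h2 : Real.log (z + 1) ≤ 1 / e * (logFact (z + e) - logFact z) := by linarith
  calc e * Real.log (z + 1) ≤ e * (1 / e * (logFact (z + e) - logFact z)) :=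
        mul_le_mul_of_nonneg_left h2 he0.le
    _ = _ := by field_simp

/-- Backward secant slopes over a step of length at least `1` are at most that of the unit step. -/
lemma logFact_backward {z e : ℝ} (he : 1 ≤ e) (hz : e ≤ z) :
    logFact z - logFact (z - e) ≤ e * Real.log z := by
  have he0 : 0 < e := by linarith
  have hi : 1 / e ≤ 1 := by rw [div_le_one he0]; exact he
  have h := logFact_comb (u := z) (v := z - e) (by linarith) (by linarith)
    (s := 1 - 1 / e) (t := 1 / e) (by linarith) (by positivity) (by ring)
  have e1 : (1 - 1 / e) * z + 1 / e * (z - e) = z - 1 := by field_simp; ring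
  have h3 := logFact_succ (z := z - 1) (by linarith)
  rw [sub_add_cancel] at h3
  rw [e1] at h
  have h2 : 1 / e * (logFact z - logFact (z - e)) ≤ Real.log z := by linarith
  calc logFact z - logFact (z - e) = e * (1 / e * (logFact z - logFact (z - e))) := by field_simp
    _ ≤ _ := mul_le_mul_of_nonneg_left h2 he0.le

lemma logFact_mid {y e : ℝ} (h1 : 0 ≤ y + e) (h2 : 0 ≤ y - e) :
    2 * logFact y ≤ logFact (y + e) + logFact (y - e) := by
  have h := logFact_comb h1 h2 (s := 1 / 2) (t := 1 / 2) (by norm_num) (by norm_num) (by norm_num)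
  have e1 : 1 / 2 * (y + e) + 1 / 2 * (y - e) = y := by ring
  rw [e1] at h
  linarith

/-- The bound `f(x) ≤ f(y) · y` in logarithmic form, with `x = y + e`, `p = a - y`, `q = b - y`. -/
lemma core {y p q e : ℝ} (hp : 1 ≤ p) (hpy : p ≤ y) (hyq : y ≤ q) (hpq : p * q = y ^ 2)
    (hx : 0 ≤ y + e) (hxa : 0 ≤ p - e) :
    2 * logFact y + logFact p + logFact q
      ≤ 2 * logFact (y + e) + logFact (p - e) + logFact (q - e) + Real.log y := by
  have hy0 : 0 < y := by linarith
  have hp0 : 0 < p := by linarith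
  have hq0 : 0 < q := by linarith
  have hlogy : 0 ≤ Real.log y := Real.log_nonneg (by linarith)
  have hlog : Real.log p + Real.log q = 2 * Real.log y := by
    rw [← Real.log_mul hp0.ne' hq0.ne', hpq, Real.log_pow]; norm_num
  rcases le_total 0 e with he | he
  · rcases le_total 1 e with h1 | h1
    · have a1 := logFact_forward hy0.le h1
      have a2 := logFact_backward (z := p) h1 (by linarith)
      have a3 := logFact_backward (z := q) h1 (by linarith)
      have a4 : Real.log y ≤ Real.log (y + 1) := Real.log_le_log hy0 (by linarith)
      have a5 : e * Real.log p + e * Real.log q = 2 * (e * Real.log y) := by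
        linear_combination e * hlog
      have a6 : e * Real.log y ≤ e * Real.log (y + 1) := mul_le_mul_of_nonneg_left a4 he
      linarith
    · have b0 := logFact_mid (y := y) (e := e) hx (by linarith)
      have b1 := logFact_incr (u := p - e) (v := y - e) (t := e) hxa (by linarith) he
      -- The step `e` at `q` against `y` is replaced by a unit step.
      have b2 := logFact_incr (u := y - 1) (v := q - 1) (t := 1 - e) (by linarith)
        (by linarith) (by linarith)
      have b3 := logFact_succ (z := y - 1) (by linarith)
      have b4 := logFact_succ (z := q - 1) (by linarith)
      have r1 : y - 1 + (1 - e) = y - e := by ring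
      have r2 : q - 1 + (1 - e) = q - e := by ring
      rw [r1, r2] at b2
      rw [sub_add_cancel] at b1 b3 b4
      rw [sub_add_cancel] at b1
      have b5 : 0 ≤ Real.log p := Real.log_nonneg hp
      linarith
  · obtain ⟨d, rfl⟩ : ∃ d, e = -d := ⟨-e, by ring⟩
    have hd : 0 ≤ d := by linarith
    simp only [sub_neg_eq_add, ← sub_eq_add_neg] at *
    rcases le_total 1 d with h1 | h1
    · have a1 := logFact_backward (z := y) h1 (by linarith)
      have a2 := logFact_forward (z := p) hp0.le h1
      have a3 := logFact_forward (z := q) hq0.le h1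
      have a4 : Real.log p ≤ Real.log (p + 1) := Real.log_le_log hp0 (by linarith)
      have a5 : Real.log q ≤ Real.log (q + 1) := Real.log_le_log hq0 (by linarith)
      have a6 : d * Real.log p + d * Real.log q = 2 * (d * Real.log y) := by
        linear_combination d * hlog
      have a7 := mul_le_mul_of_nonneg_left a4 hd
      have a8 := mul_le_mul_of_nonneg_left a5 hd
      linarith
    · have b0 := logFact_mid (y := y) (e := d) (by linarith) hx
      have b1 := logFact_incr (u := y) (v := q) (t := d) hy0.le hyq hd
      -- The step `d` at `y` against `p` is replaced by a unit step.
      have b2 := logFact_incr (u := p + d) (v := y + d) (t := 1 - d) (by linarith)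
        (by linarith) (by linarith)
      have b3 := logFact_succ hy0.le
      have b4 := logFact_succ hp0.le
      have r1 : p + d + (1 - d) = p + 1 := by ring
      have r2 : y + d + (1 - d) = y + 1 := by ring
      rw [r1, r2] at b2
      have b5 : Real.log (y + 1) ≤ Real.log (p + 1) + Real.log y := by
        rw [← Real.log_mul (by linarith) hy0.ne']
        exact Real.log_le_log (by linarith) (by nlinarith)
      linarith

lemma log_rbinom {a x : ℝ} (hx : 0 ≤ x) (hxa : x ≤ a) :
    Real.log (rbinom a x) = logFact a - (logFact x + logFact (a - x)) := by
  have h1 := Real.Gamma_pos_of_pos (s := a + 1) (by linarith)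
  have h2 := Real.Gamma_pos_of_pos (s := x + 1) (by linarith)
  have h3 := Real.Gamma_pos_of_pos (s := a - x + 1) (by linarith)
  unfold rbinom logFact
  rw [Real.log_div h1.ne' (by positivity), Real.log_mul h2.ne' h3.ne']

theorem stmt13 (a b : ℝ) (ha : 0 < a) (hab : a ≤ b) (hsq : a + b ≤ a ^ 2)
    (f : ℝ → ℝ) (hf : ∀ x, f x = rbinom a x * rbinom b x) :
    ∀ x ∈ Set.Icc (0 : ℝ) a,
      f x ≤ f (a * b / (a + b)) * (a * b) ^ 4 / (a + b) ^ 4 := by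
  rintro x ⟨hx0, hxa⟩
  have hb : 0 < b := by linarith
  have hs : 0 < a + b := by linarith
  rw [mul_div_assoc, ← div_pow]
  have hpe : a - a * b / (a + b) = a ^ 2 / (a + b) := by field_simp; ring
  have hqe : b - a * b / (a + b) = b ^ 2 / (a + b) := by field_simp; ring
  have hp : 1 ≤ a - a * b / (a + b) := by
    rw [hpe, le_div_iff₀ hs]; linarith
  have hpy : a - a * b / (a + b) ≤ a * b / (a + b) := by
    rw [hpe]; exact div_le_div_of_nonneg_right (by nlinarith) hs.le
  have hyq : a * b / (a + b) ≤ b - a * b / (a + b) := by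
    rw [hqe]; exact div_le_div_of_nonneg_right (by nlinarith) hs.le
  have hpq : (a - a * b / (a + b)) * (b - a * b / (a + b)) = (a * b / (a + b)) ^ 2 := by
    rw [hpe, hqe]; field_simp
  generalize a * b / (a + b) = y at *
  have hy0 : 0 < y := by linarith
  have h := core (e := x - y) hp hpy hyq hpq (by linarith) (by linarith)
  have r1 : y + (x - y) = x := by ring
  have r2 : a - y - (x - y) = a - x := by ring
  have r3 : b - y - (x - y) = b - x := by ring
  rw [r1, r2, r3] at h
  have hlogy : 0 ≤ Real.log y := Real.log_nonneg (by linarith)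
  have p1 := rbinom_pos hx0 hxa
  have p2 := rbinom_pos hx0 (hxa.trans hab)
  have p3 := rbinom_pos (a := a) hy0.le (by linarith)
  have p4 := rbinom_pos (a := b) hy0.le (by linarith)
  rw [hf, hf, ← Real.log_le_log_iff (by positivity) (by positivity),
    Real.log_mul p1.ne' p2.ne', Real.log_mul (by positivity) (by positivity),
    Real.log_mul p3.ne' p4.ne', Real.log_pow, log_rbinom hx0 hxa,
    log_rbinom hx0 (hxa.trans hab), log_rbinom hy0.le (by linarith),
    log_rbinom hy0.le (by linarith)]
  push_cast
  linarith
end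

section
/- (Extension of Poltyrev's bound.) Fix reals p ∈ (0, 1/2), δ > 0, and τ ∈ [0, 1]. There exists a constant α > 0 such that the following holds for every n ≥ 1 and every natural number k with k/n < 1 − H(p) − δ: if C ⊆ (ZMod 2)^n is a linear subspace whose weight distribution w_i = |{c ∈ C : wt(c) = i}| satisfies w_i ≤ 2^{(δ/3)·n} · C(n,i) · 2^{k−n} for every i ≥ τ·n, then the BSC(p)-probability of the set {η ∈ (ZMod 2)^n : ∃ c ∈ C with wt(c) ≥ τ·n and dist(η, c) ≤ wt(η)} is at most 2^{−α·n}. -/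
/-! The noise vectors are split at the weight `(p + ε) n`. Heavier ones have exponentially small
probability by Chernoff's bound (`bscProb_heavy_le`). On the lighter ones a union bound over the
codewords is used: the probability `f c` that `η` is light and at least as close to `c` as to `0`
depends only on the weight of `c` (`confusion_eq_of_wt_eq`), so the hypothesis on the weight
distribution bounds the sum of `f` over the code by `2 ^ (δ n / 3 + k - n)` times the sum of `f`
over *all* vectors (`sum_code_le`). Exchanging sums, the latter is at most the size of the Hamming
ball of radius `(p + ε) n`, which is at most `2 ^ (n H(p)) * ((1 - p) / p) ^ (ε n)`
(`card_ball_mul_le`). With `ε` small compared to `δ` this leaves `2 ^ (-δ n / 3)`.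

The outcome is a bound `2 * 2 ^ (-β n)`, useful for large `n` only. For the remaining finitely many
`n`, the event misses `η = 0`, since the hypothesis on weight `0` prevents `τ n ≤ 0`; hence its
probability is at most `1 - (1 - p) ^ n`, which is bounded away from `1`. -/

open Finset

/-- Probability, over a vector of n i.i.d. Bernoulli(p) bits, of a set of binary vectors. -/
noncomputable def bscProb {n : ℕ} (p : ℝ) (E : Finset (Fin n → ZMod 2)) : ℝ :=
  ∑ η ∈ E, p ^ wt η * (1 - p) ^ (n - wt η)

/-- Binary entropy function (base-2 logarithms). -/
noncomputable def binH (p : ℝ) : ℝ := -p * Real.logb 2 p - (1 - p) * Real.logb 2 (1 - p)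

/-! ### Hamming weight -/

lemma wt_le {n : ℕ} (x : Fin n → ZMod 2) : wt x ≤ n := by
  simpa [wt] using Finset.card_filter_le (Finset.univ : Finset (Fin n)) (fun j => x j = 1)

lemma wt_zero {n : ℕ} : wt (0 : Fin n → ZMod 2) = 0 := by
  simp [wt]

lemma wt_neg {n : ℕ} (x : Fin n → ZMod 2) : wt (-x) = wt x := by
  have : ∀ a : ZMod 2, -a = a := by decide
  congr 1
  funext j
  exact this _

lemma wt_comp_perm {n : ℕ} (x : Fin n → ZMod 2) (σ : Equiv.Perm (Fin n)) :
    wt (x ∘ σ) = wt x := by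
  unfold wt
  refine Finset.card_bij (fun j _ => σ j) ?_ ?_ ?_
  · intro a ha
    simpa using ha
  · intro a _ b _ h
    exact σ.injective h
  · intro b hb
    exact ⟨σ.symm b, by simpa using hb, by simp⟩

lemma exists_perm_of_wt_eq {n : ℕ} {c d : Fin n → ZMod 2} (h : wt c = wt d) :
    ∃ σ : Equiv.Perm (Fin n), d ∘ σ = c := by
  have hc : Fintype.card {j // c j = 1} = Fintype.card {j // d j = 1} := by
    simpa [wt, Fintype.card_subtype] using h
  let e := Fintype.equivOfCardEq hc
  refine ⟨e.extendSubtype, ?_⟩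
  funext j
  have key : ∀ a b : ZMod 2, (a = 1 ↔ b = 1) → a = b := by decide
  apply key
  constructor
  · intro h1
    by_contra h2
    exact e.extendSubtype_not_mem j h2 h1
  · intro h1
    exact e.extendSubtype_mem j h1

lemma card_wt_eq {n : ℕ} (i : ℕ) :
    (Finset.univ.filter fun c : Fin n → ZMod 2 => wt c = i).card = n.choose i := by
  have h : (Finset.powersetCard i (Finset.univ : Finset (Fin n))).card = n.choose i := by simp
  rw [← h]
  refine Finset.card_bij (fun c _ => Finset.univ.filter fun j => c j = 1) ?_ ?_ ?_
  · intro c hc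
    exact Finset.mem_powersetCard.mpr ⟨Finset.subset_univ _, (Finset.mem_filter.mp hc).2⟩
  · intro c _ d _ hcd
    have key : ∀ a b : ZMod 2, (a = 1 ↔ b = 1) → a = b := by decide
    funext j
    apply key
    simpa using Finset.ext_iff.mp hcd j
  · intro s hs
    have h1 : (Finset.univ.filter fun j => (if j ∈ s then (1 : ZMod 2) else 0) = 1) = s := by
      ext j; simp
    refine ⟨fun j => if j ∈ s then 1 else 0, ?_, h1⟩
    have h2 := (Finset.mem_powersetCard.mp hs).2
    exact Finset.mem_filter.mpr ⟨Finset.mem_univ _, (congrArg Finset.card h1).trans h2⟩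

/-- The binomial theorem, as a generating function for the Hamming weight. -/
lemma sum_pow_wt {n : ℕ} (a b : ℝ) :
    ∑ η : Fin n → ZMod 2, a ^ wt η * b ^ (n - wt η) = (a + b) ^ n := by
  have h := Finset.prod_univ_sum (fun _ : Fin n => (Finset.univ : Finset (ZMod 2)))
    (fun _ z => if z = 1 then a else b)
  have hs : ∑ z : ZMod 2, (if z = 1 then a else b) = a + b := by
    change ∑ z : Fin 2, (if z = 1 then a else b) = a + b
    simp [Fin.sum_univ_two, add_comm]
  simp only [hs, Fintype.piFinset_univ, Finset.prod_const, Finset.card_univ,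
    Fintype.card_fin] at h
  rw [h]
  refine Finset.sum_congr rfl fun η _ => ?_
  rw [Finset.prod_ite, Finset.prod_const, Finset.prod_const]
  have h2 := Finset.card_filter_add_card_filter_not (s := (Finset.univ : Finset (Fin n)))
    (fun j => η j = 1)
  have h3 : (Finset.univ.filter fun j => ¬ η j = 1).card = n - wt η := by
    simp only [Finset.card_univ, Fintype.card_fin] at h2
    unfold wt
    omega
  rw [h3]
  rfl

/-! ### The noise distribution -/

/-- The BSC(p)-probability of a single noise vector. -/
noncomputable def noiseProb {n : ℕ} (p : ℝ) (η : Fin n → ZMod 2) : ℝ :=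
  p ^ wt η * (1 - p) ^ (n - wt η)

lemma noiseProb_nonneg {n : ℕ} {p : ℝ} (h0 : 0 < p) (h1 : p < 1 / 2) (η : Fin n → ZMod 2) :
    0 ≤ noiseProb p η :=
  mul_nonneg (pow_nonneg h0.le _) (pow_nonneg (by linarith) _)

lemma sum_noiseProb {n : ℕ} (p : ℝ) : ∑ η : Fin n → ZMod 2, noiseProb p η = 1 := by
  have := sum_pow_wt (n := n) p (1 - p)
  simpa [noiseProb] using this

/-- Chernoff's bound, with the parameter of the moment generating function equal to `ε`. -/
lemma bscProb_heavy_le {n : ℕ} {p ε : ℝ} (h0 : 0 < p) (h1 : p < 1 / 2) (hε : 0 < ε)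
    (hε1 : ε ≤ 1) :
    ∑ η : Fin n → ZMod 2 with (p + ε) * n < (wt η : ℝ), noiseProb p η ≤
      Real.exp (-((1 - p) * ε ^ 2) * n) := by
  have hmgf : ∑ η : Fin n → ZMod 2, noiseProb p η * Real.exp ε ^ wt η
      = (p * Real.exp ε + (1 - p)) ^ n := by
    rw [← sum_pow_wt]
    refine Finset.sum_congr rfl fun η _ => ?_
    rw [noiseProb, mul_pow]; ring
  have hexp : Real.exp ε ≤ 1 + ε + ε ^ 2 := by
    have := Real.abs_exp_sub_one_sub_id_le (x := ε) (by rw [abs_of_pos hε]; exact hε1)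
    have := (abs_le.mp this).2
    linarith
  have hbase : p * Real.exp ε + (1 - p) ≤ Real.exp (p * ε + p * ε ^ 2) := by
    have h2 := Real.add_one_le_exp (p * ε + p * ε ^ 2)
    nlinarith
  have hbase0 : 0 ≤ p * Real.exp ε + (1 - p) := by
    have := Real.exp_pos ε
    nlinarith
  -- On the event, the factor `exp (ε * (wt η - (p + ε) n))` is at least one.
  calc ∑ η : Fin n → ZMod 2 with (p + ε) * n < (wt η : ℝ), noiseProb p η
      ≤ ∑ η : Fin n → ZMod 2 with (p + ε) * n < (wt η : ℝ),
          noiseProb p η * Real.exp ε ^ wt η * Real.exp (-(ε * ((p + ε) * n))) := by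
        refine Finset.sum_le_sum fun η hη => ?_
        have hη' := (Finset.mem_filter.mp hη).2
        rw [mul_assoc, ← Real.exp_nat_mul, ← Real.exp_add]
        refine le_mul_of_one_le_right (noiseProb_nonneg h0 h1 η) (Real.one_le_exp ?_)
        nlinarith
    _ ≤ ∑ η : Fin n → ZMod 2,
          noiseProb p η * Real.exp ε ^ wt η * Real.exp (-(ε * ((p + ε) * n))) := by
        refine Finset.sum_le_sum_of_subset_of_nonneg (Finset.filter_subset _ _) ?_
        intro η _ _
        have := noiseProb_nonneg h0 h1 η
        positivity
    _ = (p * Real.exp ε + (1 - p)) ^ n * Real.exp (-(ε * ((p + ε) * n))) := by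
        rw [← Finset.sum_mul, hmgf]
    _ ≤ Real.exp (p * ε + p * ε ^ 2) ^ n * Real.exp (-(ε * ((p + ε) * n))) := by
        gcongr
    _ = Real.exp (-((1 - p) * ε ^ 2) * n) := by
        rw [← Real.exp_nat_mul, ← Real.exp_add]
        congr 1; ring

/-- The Hamming ball of radius `(p + ε) n` is small because each of its points has probability at
least `2 ^ (-n H(p)) * (p / (1 - p)) ^ (ε n)`. -/
lemma card_ball_mul_le {n : ℕ} {p ε : ℝ} (h0 : 0 < p) (h1 : p < 1 / 2) :
    ((Finset.univ.filter fun x : Fin n → ZMod 2 => (wt x : ℝ) ≤ (p + ε) * n).card : ℝ) *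
      (2 : ℝ) ^ (-(binH p + ε * Real.logb 2 ((1 - p) / p)) * n) ≤ 1 := by
  have hq : 0 < 1 - p := by linarith
  have hpt : ∀ x : Fin n → ZMod 2, (wt x : ℝ) ≤ (p + ε) * n →
      (2 : ℝ) ^ (-(binH p + ε * Real.logb 2 ((1 - p) / p)) * n) ≤ noiseProb p x := by
    intro x hx
    have hP : noiseProb p x =
        (2 : ℝ) ^ (Real.logb 2 p * wt x + Real.logb 2 (1 - p) * (n - wt x)) := by
      rw [Real.rpow_add two_pos, Real.rpow_mul two_pos.le, Real.rpow_mul two_pos.le,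
        Real.rpow_logb two_pos (by norm_num) h0, Real.rpow_logb two_pos (by norm_num) hq,
        ← Nat.cast_sub (wt_le x), Real.rpow_natCast, Real.rpow_natCast, noiseProb]
    rw [hP]
    apply Real.rpow_le_rpow_of_exponent_le (by norm_num)
    rw [Real.logb_div hq.ne' h0.ne', binH]
    have hlog : Real.logb 2 p ≤ Real.logb 2 (1 - p) :=
      Real.logb_le_logb_of_le (by norm_num) h0 (by linarith)
    nlinarith [mul_le_mul_of_nonneg_left hx (sub_nonneg.mpr hlog)]
  calc _ = ∑ x : Fin n → ZMod 2 with (wt x : ℝ) ≤ (p + ε) * n,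
        (2 : ℝ) ^ (-(binH p + ε * Real.logb 2 ((1 - p) / p)) * n) := by
        rw [Finset.sum_const, nsmul_eq_mul]
    _ ≤ ∑ x : Fin n → ZMod 2 with (wt x : ℝ) ≤ (p + ε) * n, noiseProb p x :=
        Finset.sum_le_sum fun x hx => hpt x (Finset.mem_filter.mp hx).2
    _ ≤ ∑ x : Fin n → ZMod 2, noiseProb p x :=
        Finset.sum_le_sum_of_subset_of_nonneg (Finset.filter_subset _ _)
          fun x _ _ => noiseProb_nonneg h0 h1 x
    _ = 1 := sum_noiseProb p

/-! ### Union bound over the code -/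

/-- The probability that the noise has weight at most `T` and is at least as close to `c` as to
the transmitted word `0`. -/
noncomputable def confusion {n : ℕ} (p T : ℝ) (c : Fin n → ZMod 2) : ℝ :=
  ∑ η : Fin n → ZMod 2 with wt (η - c) ≤ wt η ∧ (wt η : ℝ) ≤ T, noiseProb p η

lemma confusion_nonneg {n : ℕ} {p : ℝ} (h0 : 0 < p) (h1 : p < 1 / 2) (T : ℝ)
    (c : Fin n → ZMod 2) : 0 ≤ confusion p T c :=
  Finset.sum_nonneg fun η _ => noiseProb_nonneg h0 h1 η

/-- Two vectors of equal weight differ by a coordinate permutation, which preserves both the noise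
distribution and Hamming distances. -/
lemma confusion_eq_of_wt_eq {n : ℕ} (p T : ℝ) {c d : Fin n → ZMod 2} (h : wt c = wt d) :
    confusion p T c = confusion p T d := by
  obtain ⟨σ, rfl⟩ := exists_perm_of_wt_eq h
  symm
  have hsub : ∀ x : Fin n → ZMod 2, wt (x ∘ σ - d ∘ σ) = wt (x - d) := fun x =>
    wt_comp_perm (x - d) σ
  refine Finset.sum_bij (fun η _ => η ∘ σ) ?_ ?_ ?_ ?_
  · intro η hη
    simpa [hsub, wt_comp_perm] using hη
  · intro a _ b _ hab
    exact σ.surjective.injective_comp_right hab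
  · intro b hb
    have hb' : (b ∘ σ.symm) ∘ σ = b := by funext j; simp
    refine ⟨b ∘ σ.symm, ?_, hb'⟩
    have h2 := hsub (b ∘ σ.symm)
    rw [hb'] at h2
    simpa [← h2, wt_comp_perm] using hb
  · intro a _
    simp [noiseProb, wt_comp_perm]

/-- If the weight distribution of `S` is at most `M` times that of the whole space, then sums over
`S` of nonnegative functions of the weight are at most `M` times the sums over the whole space. -/
lemma sum_code_le {n : ℕ} (S : Finset (Fin n → ZMod 2)) (M : ℝ) (hM : 0 ≤ M)
    (f : (Fin n → ZMod 2) → ℝ) (hf : ∀ c, 0 ≤ f c) (hwt : ∀ c d, wt c = wt d → f c = f d)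
    (hS : ∀ c ∈ S, ((S.filter fun d => wt d = wt c).card : ℝ) ≤ M * n.choose (wt c)) :
    ∑ c ∈ S, f c ≤ M * ∑ c, f c := by
  have hmaps : ∀ s : Finset (Fin n → ZMod 2), ∀ c ∈ s, wt c ∈ Finset.range (n + 1) :=
    fun s c _ => Finset.mem_range.mpr (Nat.lt_succ_of_le (wt_le c))
  rw [← Finset.sum_fiberwise_of_maps_to (hmaps S) f,
    ← Finset.sum_fiberwise_of_maps_to (hmaps Finset.univ) f, Finset.mul_sum]
  refine Finset.sum_le_sum fun i _ => ?_
  rcases (S.filter fun d => wt d = i).eq_empty_or_nonempty with he | ⟨c, hc⟩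
  · rw [he, Finset.sum_empty]
    exact mul_nonneg hM (Finset.sum_nonneg fun c _ => hf c)
  · obtain ⟨hcS, rfl⟩ := Finset.mem_filter.mp hc
    have hconst : ∀ s : Finset (Fin n → ZMod 2),
        ∑ d ∈ s with wt d = wt c, f d = (s.filter fun d => wt d = wt c).card * f c := by
      intro s
      rw [Finset.sum_congr rfl fun d hd => hwt d c (Finset.mem_filter.mp hd).2,
        Finset.sum_const, nsmul_eq_mul]
    rw [hconst, hconst, card_wt_eq, ← mul_assoc]
    exact mul_le_mul_of_nonneg_right (hS c hcS) (hf c)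

/-- Exchanging the two sums, each light noise vector `η` is counted once for every `c` in the ball
of radius `wt η` around it. -/
lemma sum_confusion_le {n : ℕ} {p : ℝ} (h0 : 0 < p) (h1 : p < 1 / 2) (T : ℝ) :
    ∑ c : Fin n → ZMod 2, confusion p T c ≤
      ((Finset.univ.filter fun x : Fin n → ZMod 2 => (wt x : ℝ) ≤ T).card : ℝ) := by
  simp only [confusion, Finset.sum_filter]
  rw [Finset.sum_comm]
  set B := Finset.univ.filter fun x : Fin n → ZMod 2 => (wt x : ℝ) ≤ T with hB
  calc _ ≤ ∑ η : Fin n → ZMod 2, (B.card : ℝ) * noiseProb p η := by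
        refine Finset.sum_le_sum fun η _ => ?_
        rw [← Finset.sum_filter, Finset.sum_const, nsmul_eq_mul]
        refine mul_le_mul_of_nonneg_right ?_ (noiseProb_nonneg h0 h1 η)
        norm_cast
        refine Finset.card_le_card_of_injOn (fun c => η - c) ?_ ?_
        · intro c hc
          simp only [Finset.coe_filter, Finset.mem_univ, true_and, Set.mem_ofPred_eq] at hc
          simp only [hB, Finset.coe_filter, Finset.mem_univ, true_and, Set.mem_ofPred_eq]
          exact le_trans (by exact_mod_cast hc.1) hc.2
        · intro a _ b _ hab
          exact sub_right_injective hab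
    _ = B.card := by rw [← Finset.mul_sum, sum_noiseProb, mul_one]

/-! ### Bounds on the error probability -/

open scoped Classical in
/-- The exponential bound up to the factor `2`. The slack `δ` in the rate pays `δ / 3` each for the
weight distribution, for the ball (`hεδ`) and for the final exponent (`hβδ`); `hβε` makes Chernoff's
bound at most `2 ^ (-β n)`. -/
lemma bscProb_le_two_mul {p δ τ ε β : ℝ} (hp0 : 0 < p) (hp1 : p < 1 / 2) (hε : 0 < ε)
    (hε1 : ε ≤ 1) (hεδ : ε * Real.logb 2 ((1 - p) / p) ≤ δ / 3) (hβδ : β ≤ δ / 3)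
    (hβε : β * Real.log 2 ≤ (1 - p) * ε ^ 2) {n k : ℕ} (hn : 1 ≤ n)
    (C : Submodule (ZMod 2) (Fin n → ZMod 2)) (hk : (k : ℝ) / n < 1 - binH p - δ)
    (hC : ∀ i : ℕ, τ * n ≤ (i : ℝ) →
      ((Finset.univ.filter fun c : Fin n → ZMod 2 => c ∈ C ∧ wt c = i).card : ℝ) ≤
        (2 : ℝ) ^ ((δ / 3) * n) * (n.choose i : ℝ) * (2 : ℝ) ^ ((k : ℤ) - (n : ℤ))) :
    bscProb p (Finset.univ.filter fun η : Fin n → ZMod 2 =>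
      ∃ c ∈ C, τ * n ≤ (wt c : ℝ) ∧ wt (η - c) ≤ wt η) ≤ 2 * (2 : ℝ) ^ (-β * n) := by
  have hn0 : (0 : ℝ) < n := by exact_mod_cast hn
  set T : ℝ := (p + ε) * n with hT
  set S := Finset.univ.filter fun c : Fin n → ZMod 2 => c ∈ C ∧ τ * n ≤ (wt c : ℝ) with hS
  set M : ℝ := (2 : ℝ) ^ ((δ / 3) * n) * (2 : ℝ) ^ ((k : ℤ) - (n : ℤ)) with hMdef
  have hM : 0 ≤ M := by positivity
  have hunion : bscProb p (Finset.univ.filter fun η : Fin n → ZMod 2 =>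
      ∃ c ∈ C, τ * n ≤ (wt c : ℝ) ∧ wt (η - c) ≤ wt η) ≤
      (∑ η : Fin n → ZMod 2 with T < (wt η : ℝ), noiseProb p η) + ∑ c ∈ S, confusion p T c := by
    change ∑ η ∈ _, noiseProb p η ≤ _
    have hnn : ∀ η : Fin n → ZMod 2, 0 ≤ noiseProb p η := noiseProb_nonneg hp0 hp1
    simp only [confusion, Finset.sum_filter]
    rw [Finset.sum_comm, ← Finset.sum_add_distrib]
    refine Finset.sum_le_sum fun η _ => ?_
    have hterm : ∀ c : Fin n → ZMod 2,
        0 ≤ if wt (η - c) ≤ wt η ∧ (wt η : ℝ) ≤ T then noiseProb p η else 0 := fun c => by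
      split_ifs
      exacts [hnn η, le_rfl]
    have hsum0 := Finset.sum_nonneg fun c (_ : c ∈ S) => hterm c
    by_cases hη : ∃ c ∈ C, τ * n ≤ (wt c : ℝ) ∧ wt (η - c) ≤ wt η
    · rw [if_pos hη]
      obtain ⟨c, hcC, hcτ, hcw⟩ := hη
      rcases lt_or_ge T (wt η : ℝ) with h | h
      · rw [if_pos h]
        linarith
      · rw [if_neg (not_lt.mpr h), zero_add]
        have hcS : c ∈ S := by simp [hS, hcC, hcτ]
        have := Finset.single_le_sum (fun c (_ : c ∈ S) => hterm c) hcS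
        rwa [if_pos ⟨hcw, h⟩] at this
    · rw [if_neg hη]
      refine add_nonneg ?_ hsum0
      split_ifs
      exacts [hnn η, le_rfl]
  have hheavy : ∑ η : Fin n → ZMod 2 with T < (wt η : ℝ), noiseProb p η ≤ (2 : ℝ) ^ (-β * n) := by
    refine (bscProb_heavy_le hp0 hp1 hε hε1).trans ?_
    rw [Real.rpow_def_of_pos two_pos]
    apply Real.exp_le_exp.mpr
    nlinarith
  have hlight : ∑ c ∈ S, confusion p T c ≤ (2 : ℝ) ^ (-β * n) := by
    have h1 : ∑ c ∈ S, confusion p T c ≤ M * ∑ c : Fin n → ZMod 2, confusion p T c := by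
      refine sum_code_le S M hM _ (confusion_nonneg hp0 hp1 T)
        (fun c d => confusion_eq_of_wt_eq p T) fun c hc => ?_
      have hc' := (Finset.mem_filter.mp hc).2
      refine le_trans ?_ ((hC (wt c) hc'.2).trans_eq (by rw [hMdef]; ring))
      norm_cast
      refine Finset.card_le_card fun d hd => ?_
      simp only [hS, Finset.mem_filter, Finset.mem_univ, true_and] at hd ⊢
      exact ⟨hd.1.1, hd.2⟩
    have h2 := h1.trans (mul_le_mul_of_nonneg_left (sum_confusion_le hp0 hp1 T) hM)
    have h3 := card_ball_mul_le (n := n) (ε := ε) hp0 hp1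
    set b : ℝ := ((Finset.univ.filter fun x : Fin n → ZMod 2 => (wt x : ℝ) ≤ T).card : ℝ)
    set L := Real.logb 2 ((1 - p) / p)
    have h4 : b ≤ (2 : ℝ) ^ ((binH p + ε * L) * n) := by
      rw [neg_mul, Real.rpow_neg two_pos.le, ← div_eq_mul_inv] at h3
      exact (div_le_one (by positivity)).mp h3
    refine h2.trans ((mul_le_mul_of_nonneg_left h4 hM).trans ?_)
    have h5 : (2 : ℝ) ^ ((k : ℤ) - (n : ℤ)) = (2 : ℝ) ^ ((k : ℝ) - n) := by
      rw [← Real.rpow_intCast]; push_cast; rfl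
    rw [hMdef, h5, ← Real.rpow_add two_pos, ← Real.rpow_add two_pos]
    apply Real.rpow_le_rpow_of_exponent_le (by norm_num)
    have hk' := (div_lt_iff₀ hn0).mp hk
    nlinarith
  linarith

open scoped Classical in
/-- A bound away from `1` for every single block length. -/
lemma bscProb_le_one_sub {p δ τ : ℝ} (hp0 : 0 < p) (hp1 : p < 1 / 2) (hδ : 0 < δ)
    {n k : ℕ} (hn : 1 ≤ n)
    (C : Submodule (ZMod 2) (Fin n → ZMod 2)) (hk : (k : ℝ) / n < 1 - binH p - δ)
    (hC : ∀ i : ℕ, τ * n ≤ (i : ℝ) →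
      ((Finset.univ.filter fun c : Fin n → ZMod 2 => c ∈ C ∧ wt c = i).card : ℝ) ≤
        (2 : ℝ) ^ ((δ / 3) * n) * (n.choose i : ℝ) * (2 : ℝ) ^ ((k : ℤ) - (n : ℤ))) :
    bscProb p (Finset.univ.filter fun η : Fin n → ZMod 2 =>
      ∃ c ∈ C, τ * n ≤ (wt c : ℝ) ∧ wt (η - c) ≤ wt η) ≤ 1 - (1 - p) ^ n := by
  have hn0 : (0 : ℝ) < n := by exact_mod_cast hn
  set E := Finset.univ.filter fun η : Fin n → ZMod 2 =>
      ∃ c ∈ C, τ * n ≤ (wt c : ℝ) ∧ wt (η - c) ≤ wt η with hE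
  have hH : 0 ≤ binH p := by
    have h1 : Real.logb 2 p ≤ 0 := Real.logb_nonpos (by norm_num) hp0.le (by linarith)
    have h2 : Real.logb 2 (1 - p) ≤ 0 :=
      Real.logb_nonpos (by norm_num) (by linarith) (by linarith)
    unfold binH
    nlinarith
  have hτ : ¬ τ * n ≤ 0 := by
    intro hτ
    have h := hC 0 (by simpa using hτ)
    have h1 : (1 : ℝ) ≤
        ((Finset.univ.filter fun c : Fin n → ZMod 2 => c ∈ C ∧ wt c = 0).card : ℝ) := by
      norm_cast
      exact Finset.card_pos.mpr ⟨0, by simp [wt_zero]⟩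
    have h5 : (2 : ℝ) ^ ((k : ℤ) - (n : ℤ)) = (2 : ℝ) ^ ((k : ℝ) - n) := by
      rw [← Real.rpow_intCast]; push_cast; rfl
    rw [Nat.choose_zero_right, Nat.cast_one, mul_one, h5, ← Real.rpow_add two_pos] at h
    have h6 : (2 : ℝ) ^ ((δ / 3) * n + ((k : ℝ) - n)) < 1 := by
      apply Real.rpow_lt_one_of_one_lt_of_neg (by norm_num)
      have hk' := (div_lt_iff₀ hn0).mp hk
      nlinarith
    linarith
  have h0E : (0 : Fin n → ZMod 2) ∉ E := by
    simp only [hE, Finset.mem_filter, Finset.mem_univ, true_and, not_exists, not_and]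
    intro c _ hc hw
    rw [zero_sub, wt_neg, wt_zero, Nat.le_zero] at hw
    rw [hw, Nat.cast_zero] at hc
    exact hτ hc
  have hsum : ∑ η ∈ insert 0 E, noiseProb p η ≤ 1 := by
    rw [← sum_noiseProb (n := n) p]
    exact Finset.sum_le_sum_of_subset_of_nonneg (Finset.subset_univ _)
      fun η _ _ => noiseProb_nonneg hp0 hp1 η
  rw [Finset.sum_insert h0E] at hsum
  have h0 : noiseProb p (0 : Fin n → ZMod 2) = (1 - p) ^ n := by simp [noiseProb, wt_zero]
  rw [h0] at hsum
  change ∑ η ∈ E, noiseProb p η ≤ _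
  linarith

open scoped Classical in
theorem stmt14 (p δ τ : ℝ) (hp0 : 0 < p) (hp1 : p < 1 / 2) (hδ : 0 < δ)
    (hτ0 : 0 ≤ τ) (hτ1 : τ ≤ 1) :
    ∃ α : ℝ, 0 < α ∧
      ∀ (n k : ℕ), 1 ≤ n →
        ∀ C : Submodule (ZMod 2) (Fin n → ZMod 2),
          (k : ℝ) / n < 1 - binH p - δ →
          (∀ i : ℕ, τ * n ≤ (i : ℝ) →
            ((Finset.univ.filter fun c : Fin n → ZMod 2 => c ∈ C ∧ wt c = i).card : ℝ) ≤
              (2 : ℝ) ^ ((δ / 3) * n) * (n.choose i : ℝ) * (2 : ℝ) ^ ((k : ℤ) - (n : ℤ))) →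
          bscProb p (Finset.univ.filter fun η : Fin n → ZMod 2 =>
              ∃ c ∈ C, τ * n ≤ (wt c : ℝ) ∧ wt (η - c) ≤ wt η) ≤
            (2 : ℝ) ^ (-α * n) := by
  have hL : 0 < Real.logb 2 ((1 - p) / p) :=
    Real.logb_pos (by norm_num) ((one_lt_div hp0).mpr (by linarith))
  set L := Real.logb 2 ((1 - p) / p)
  have hlog2 : 0 < Real.log 2 := Real.log_pos (by norm_num)
  obtain ⟨ε, hε, hε1, hεδ⟩ : ∃ ε : ℝ, 0 < ε ∧ ε ≤ 1 ∧ ε * L ≤ δ / 3 := by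
    refine ⟨min 1 (δ / 3 / L), by positivity, min_le_left _ _, ?_⟩
    exact (le_div_iff₀ hL).mp (min_le_right _ _)
  obtain ⟨β, hβ, hβδ, hβε⟩ : ∃ β : ℝ, 0 < β ∧ β ≤ δ / 3 ∧
      β * Real.log 2 ≤ (1 - p) * ε ^ 2 := by
    have hq : 0 < 1 - p := by linarith
    refine ⟨min (δ / 3) ((1 - p) * ε ^ 2 / Real.log 2), by positivity, min_le_left _ _, ?_⟩
    exact (le_div_iff₀ hlog2).mp (min_le_right _ _)
  -- From block length `N` on, the factor `2` is absorbed by half of the exponent `β n`.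
  obtain ⟨N, hN1, hN⟩ : ∃ N : ℕ, 1 ≤ N ∧ 2 / β ≤ N :=
    ⟨max 1 ⌈2 / β⌉₊, le_max_left _ _,
      (Nat.le_ceil _).trans (by exact_mod_cast le_max_right _ _)⟩
  have hN0 : (0 : ℝ) < N := by exact_mod_cast hN1
  set q : ℝ := 1 - (1 - p) ^ N with hq
  have hq0 : 0 < q := by
    have : (1 - p) ^ N < 1 := pow_lt_one₀ (by linarith) (by linarith) (by omega)
    linarith
  have hq1 : q < 1 := by
    have : 0 < (1 - p) ^ N := pow_pos (by linarith) N
    linarith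
  have hlq : Real.logb 2 q < 0 := Real.logb_neg (by norm_num) hq0 hq1
  have hγ : 0 < -Real.logb 2 q / N := div_pos (by linarith) hN0
  refine ⟨min (β / 2) (-Real.logb 2 q / N), lt_min (by linarith) hγ, ?_⟩
  set α := min (β / 2) (-Real.logb 2 q / N)
  have hα1 : α ≤ β / 2 := min_le_left _ _
  have hα2 : α * N ≤ -Real.logb 2 q := (le_div_iff₀ hN0).mp (min_le_right _ _)
  have hα0 : 0 < α := lt_min (by linarith) hγ
  intro n k hn C hk hC
  have hn0 : (0 : ℝ) < n := by exact_mod_cast hn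
  rcases le_total N n with hNn | hnN
  · refine (bscProb_le_two_mul hp0 hp1 hε hε1 hεδ hβδ hβε hn C hk hC).trans ?_
    have hNn' : (N : ℝ) ≤ n := by exact_mod_cast hNn
    have h2 : 2 ≤ n * β := (div_le_iff₀ hβ).mp (hN.trans hNn')
    calc 2 * (2 : ℝ) ^ (-β * n) = (2 : ℝ) ^ (1 + -β * n) := by
          rw [Real.rpow_add two_pos, Real.rpow_one]
      _ ≤ _ := by
          apply Real.rpow_le_rpow_of_exponent_le (by norm_num)
          nlinarith
  · refine (bscProb_le_one_sub hp0 hp1 hδ hn C hk hC).trans ?_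
    have hnN' : (n : ℝ) ≤ N := by exact_mod_cast hnN
    have h1 : (1 - p) ^ N ≤ (1 - p) ^ n :=
      pow_le_pow_of_le_one (by linarith) (by linarith) hnN
    calc 1 - (1 - p) ^ n ≤ q := by rw [hq]; linarith
      _ = (2 : ℝ) ^ Real.logb 2 q := (Real.rpow_logb two_pos (by norm_num) hq0).symm
      _ ≤ _ := by
          apply Real.rpow_le_rpow_of_exponent_le (by norm_num)
          nlinarith
end

section
/- (Existence of a pseudo-random-weight infinite generating matrix.) For every integer k ≥ 1 there exists an infinite sequence of row vectors R_1, R_2, … ∈ (ZMod 2)^k with R_i equal to the i-th standard basis vector for 1 ≤ i ≤ k, such that for every n ≥ max(k, 2), the weight distribution w_{i,n} = |{m ∈ (ZMod 2)^k : wt(G_n·m) = i}| of the code generated by G_n satisfies: (a) w_{i,n} = 0 for every i with 0 < i ≤ (n − k)/(55·log₂ n), i.e., the minimum distance of the code exceeds (n − k)/(55·log₂ n); and (b) w_{i,n} ≤ 2n⁴ + C(n,i)·2^{k−n}·e^{2(√n − √k)} for every i. -/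
/-!
Choose the rows after the first `k` independently and uniformly at random. A word `x` of length `n`
whose first `k` coordinates form a nonzero message is a codeword with probability `2^{k-n}`
(`codeEvent_prob`), and two distinct such words are both codewords with probability at most
`4^{k-n}` (`codeEvent_pair_prob`). Hence, for `i > 0`, the number of codewords of weight `i` has mean
at most `M = C(n,i) 2^{k-n}` and variance at most its mean.

Chebyshev's inequality bounds the probability that this number exceeds `2 n⁴ + M e^{2(√n - √k)}` by
`1 / (8 n³)` (`prob_overweight`), and Markov's inequality bounds the probability that some codeword
has a weight `i ≤ (n - k) / (55 log₂ n)` by the same quantity for each `i` (`prob_lowWeight`). These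
probabilities sum to less than `1` over all `n > k` and `1 ≤ i ≤ n`, so some sequence of rows avoids
every bad event (`exists_good`). The remaining cases `n = k`, `i = 0` and `i > n` hold for every
choice of rows, as the code is systematic.
-/

open Finset

open MeasureTheory ProbabilityTheory

/-! ### Uniform random rows -/

/-- Flipping a coordinate in the support of `a` exchanges the two values of `r ⬝ a`, so each value
is taken by exactly half of the rows. -/
lemma card_dot_eq {k : ℕ} {a : Fin k → ZMod 2} (ha : a ≠ 0) (s : ZMod 2) :
    2 * #{r : Fin k → ZMod 2 | ∑ l, r l * a l = s} = Fintype.card (Fin k → ZMod 2) := by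
  obtain ⟨l₀, hl₀⟩ := Function.ne_iff.mp ha
  have ha1 : a l₀ = 1 := by
    have : ∀ z : ZMod 2, z ≠ 0 → z = 1 := by decide
    exact this _ hl₀
  have hflip : ∀ r : Fin k → ZMod 2,
      ∑ l, (r + (Pi.single l₀ 1 : Fin k → ZMod 2)) l * a l = ∑ l, r l * a l + 1 := by
    intro r
    simp [add_mul, Finset.sum_add_distrib, Pi.single_apply, ha1]
  have hcompl : #{r : Fin k → ZMod 2 | ∑ l, r l * a l = s}
      = #{r : Fin k → ZMod 2 | ¬ ∑ l, r l * a l = s} := by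
    refine Finset.card_equiv (Equiv.addRight (Pi.single l₀ (1 : ZMod 2))) fun r => ?_
    simp only [Finset.mem_filter, Finset.mem_univ, true_and, Equiv.coe_addRight, hflip]
    generalize ∑ l, r l * a l = u
    revert u s
    decide
  have := Finset.card_filter_add_card_filter_not (s := (univ : Finset (Fin k → ZMod 2)))
    (fun r => ∑ l, r l * a l = s)
  rw [Finset.card_univ] at this
  omega

/-- Over `ZMod 2`, distinct nonzero `a` and `b` have `a + b ≠ 0`; applying `card_dot_eq` to `a`,
`b` and `a + b` determines the four joint fibres of `r ↦ (r ⬝ a, r ⬝ b)`. -/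
lemma card_dot_pair_eq {k : ℕ} {a b : Fin k → ZMod 2} (ha : a ≠ 0) (hb : b ≠ 0) (hab : a ≠ b)
    (s t : ZMod 2) :
    4 * #{r : Fin k → ZMod 2 | ∑ l, r l * a l = s ∧ ∑ l, r l * b l = t}
      = Fintype.card (Fin k → ZMod 2) := by
  have hab' : a + b ≠ 0 := by
    intro h
    refine hab (funext fun l => ?_)
    have hl : a l + b l = 0 := congrFun h l
    exact (by decide : ∀ u v : ZMod 2, u + v = 0 → u = v) _ _ hl
  have h1 := card_dot_eq ha s
  have h2 := card_dot_eq hb t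
  have h3 := card_dot_eq hb (t + 1)
  have h4 := card_dot_eq hab' (s + t)
  have hsum : ∀ r : Fin k → ZMod 2,
      ∑ l, r l * (a + b) l = ∑ l, r l * a l + ∑ l, r l * b l := by
    intro r; simp [mul_add, Finset.sum_add_distrib]
  simp only [hsum] at h4
  -- Splitting by the value of the other functional expresses each half as a sum of two cells.
  have key : ∀ (f g : (Fin k → ZMod 2) → ZMod 2),
      #{r | f r = s} = #{r | f r = s ∧ g r = t} + #{r | f r = s ∧ g r = t + 1} ∧
      #{r | g r = t} = #{r | f r = s ∧ g r = t} + #{r | f r = s + 1 ∧ g r = t} ∧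
      #{r | g r = t + 1} = #{r | f r = s ∧ g r = t + 1} + #{r | f r = s + 1 ∧ g r = t + 1} ∧
      #{r | f r + g r = s + t} = #{r | f r = s ∧ g r = t} + #{r | f r = s + 1 ∧ g r = t + 1} := by
    intro f g
    clear h1 h2 h3 h4
    simp only [Finset.card_filter, ← Finset.sum_add_distrib]
    refine ⟨?_, ?_, ?_, ?_⟩ <;> refine Finset.sum_congr rfl fun r _ => ?_ <;>
      generalize f r = u <;> generalize g r = v <;> revert u v s t <;> decide
  obtain ⟨k1, k2, k3, k4⟩ := key (fun r => ∑ l, r l * a l) (fun r => ∑ l, r l * b l)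
  omega

/-- The law of an infinite sequence of independent rows, each uniform on `(ZMod 2)^k`. -/
noncomputable def rowSeqMeasure (k : ℕ) : Measure (ℕ → Fin k → ZMod 2) :=
  Measure.infinitePi fun _ => uniformOn Set.univ

instance uniformRow_isProb (k : ℕ) :
    IsProbabilityMeasure (uniformOn (Set.univ : Set (Fin k → ZMod 2))) :=
  isProbabilityMeasure_uniformOn Set.finite_univ Set.univ_nonempty

instance rowSeqMeasure_isProb (k : ℕ) : IsProbabilityMeasure (rowSeqMeasure k) := by
  unfold rowSeqMeasure; infer_instance

lemma uniformRow_real {k c : ℕ} (p : (Fin k → ZMod 2) → Prop) [DecidablePred p] (hc : 0 < c)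
    (h : c * #{r | p r} = Fintype.card (Fin k → ZMod 2)) :
    (uniformOn Set.univ).real {r | p r} = 1 / c := by
  have hset : {r | p r} = ((univ.filter p : Finset (Fin k → ZMod 2)) : Set _) := by ext; simp
  rw [Measure.real, uniformOn_univ, hset, Measure.count_apply_finset, ← h]
  have : 0 < #{r | p r} := by
    by_contra h0
    have : #{r | p r} = 0 := by omega
    rw [this, mul_zero] at h
    exact Fintype.card_ne_zero h.symm
  rw [ENNReal.toReal_div]
  simp only [ENNReal.toReal_natCast]
  push_cast
  have : (0 : ℝ) < #{r | p r} := by exact_mod_cast this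
  field_simp

lemma rowSeq_real {k c : ℕ} (J : Finset ℕ) (p : ℕ → (Fin k → ZMod 2) → Prop)
    [∀ j, DecidablePred (p j)] (hc : 0 < c)
    (h : ∀ j, c * #{r | p j r} = Fintype.card (Fin k → ZMod 2)) :
    (rowSeqMeasure k).real {ω | ∀ j ∈ J, p j (ω j)} = (1 / c) ^ #J := by
  have hset : {ω : ℕ → Fin k → ZMod 2 | ∀ j ∈ J, p j (ω j)} =
      (J : Set ℕ).pi fun j => {r | p j r} := by
    ext; simp
  rw [hset, Measure.real, rowSeqMeasure,
    Measure.infinitePi_pi _ (fun i _ => MeasurableSet.of_discrete),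
    ENNReal.toReal_prod]
  exact (Finset.prod_congr rfl fun j _ => uniformRow_real (p j) hc (h j)).trans
    (Finset.prod_const _)

lemma measurable_rowEvent {k : ℕ} (J : Finset ℕ) (p : ℕ → (Fin k → ZMod 2) → Prop) :
    MeasurableSet {ω : ℕ → Fin k → ZMod 2 | ∀ j ∈ J, p j (ω j)} := by
  have hset : {ω : ℕ → Fin k → ZMod 2 | ∀ j ∈ J, p j (ω j)} =
      (J : Set ℕ).pi fun j => {r | p j r} := by
    ext; simp
  rw [hset]
  exact MeasurableSet.pi J.countable_toSet fun _ _ => MeasurableSet.of_discrete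

/-! ### Moment bounds for counting events -/

/-- Chebyshev's inequality for the number of events of a finite family that occur, when each event
has probability `p` and any two are independent or negatively correlated: the variance is then at
most the mean. -/
lemma chebyshev_count {Ω ι : Type*} [MeasurableSpace Ω] (P : Measure Ω) [IsProbabilityMeasure P]
    (S : Finset ι) (E : ι → Set Ω) (hE : ∀ x ∈ S, MeasurableSet (E x)) (p : ℝ)
    (h1 : ∀ x ∈ S, P.real (E x) = p)
    (h2 : ∀ x ∈ S, ∀ y ∈ S, x ≠ y → P.real (E x ∩ E y) ≤ p ^ 2) (t : ℝ) (ht : 0 < t) :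
    P.real {ω | #S * p + t ≤ ∑ x ∈ S, (E x).indicator (1 : Ω → ℝ) ω} ≤ #S * p / t ^ 2 := by
  classical
  set N : Ω → ℝ := fun ω => ∑ x ∈ S, (E x).indicator (1 : Ω → ℝ) ω with hN
  have hint : ∀ A : Set Ω, MeasurableSet A → Integrable (A.indicator (1 : Ω → ℝ)) P :=
    fun A hA => (integrable_const (1 : ℝ)).indicator hA
  have hNint : Integrable N P := integrable_finsetSum _ fun x hx => hint _ (hE x hx)
  have hN1 : ∫ ω, N ω ∂P = #S * p := by
    rw [hN, integral_finsetSum _ fun x hx => hint _ (hE x hx),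
      Finset.sum_congr rfl fun x hx => (integral_indicator_one (hE x hx)).trans (h1 x hx)]
    simp
  have hsq : ∀ ω, N ω ^ 2 = ∑ x ∈ S, ∑ y ∈ S, (E x ∩ E y).indicator (1 : Ω → ℝ) ω := by
    intro ω
    rw [hN, sq, Finset.sum_mul_sum]
    refine Finset.sum_congr rfl fun x _ => Finset.sum_congr rfl fun y _ => ?_
    rw [Set.inter_indicator_one]; rfl
  have hmeas2 : ∀ x ∈ S, ∀ y ∈ S, Integrable ((E x ∩ E y).indicator (1 : Ω → ℝ)) P :=
    fun x hx y hy => hint _ ((hE x hx).inter (hE y hy))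
  have hN2int : Integrable (fun ω => N ω ^ 2) P := by
    simp_rw [hsq]
    exact integrable_finsetSum _ fun x hx => integrable_finsetSum _ fun y hy => hmeas2 x hx y hy
  have hN2 : ∫ ω, N ω ^ 2 ∂P ≤ #S * p + (#S * p) ^ 2 := by
    simp_rw [hsq]
    rw [integral_finsetSum _ fun x hx => integrable_finsetSum _ fun y hy => hmeas2 x hx y hy]
    have : ∀ x ∈ S, ∫ ω, ∑ y ∈ S, (E x ∩ E y).indicator (1 : Ω → ℝ) ω ∂P ≤ p + #S * p ^ 2 := by
      intro x hx
      rw [integral_finsetSum _ fun y hy => hmeas2 x hx y hy,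
        Finset.sum_congr rfl fun y hy => integral_indicator_one ((hE x hx).inter (hE y hy))]
      calc ∑ y ∈ S, P.real (E x ∩ E y) ≤ ∑ y ∈ S, ((if y = x then p else 0) + p ^ 2) := by
            refine Finset.sum_le_sum fun y hy => ?_
            by_cases hxy : y = x
            · subst hxy
              rw [Set.inter_self, h1 y hy, if_pos rfl]
              nlinarith [sq_nonneg p]
            · rw [if_neg hxy, zero_add]
              exact h2 x hx y hy (Ne.symm hxy)
        _ = p + #S * p ^ 2 := by simp [Finset.sum_add_distrib, hx]
    refine (Finset.sum_le_sum this).trans (le_of_eq ?_)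
    simp; ring
  have hvar : ∫ ω, (N ω - #S * p) ^ 2 ∂P ≤ #S * p := by
    have : ∀ ω, (N ω - #S * p) ^ 2 = N ω ^ 2 - 2 * (#S * p) * N ω + (#S * p) ^ 2 := by
      intro ω; ring
    simp_rw [this]
    have hsub : Integrable (fun ω => N ω ^ 2 - 2 * (#S * p) * N ω) P :=
      hN2int.sub (hNint.const_mul _)
    rw [integral_add hsub (integrable_const _),
      integral_sub hN2int (hNint.const_mul _), integral_const_mul, hN1]
    simp only [integral_const, probReal_univ, one_smul]
    nlinarith
  have hcint : Integrable (fun ω => (N ω - #S * p) ^ 2) P := by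
    have : ∀ ω, (N ω - #S * p) ^ 2 = N ω ^ 2 - 2 * (#S * p) * N ω + (#S * p) ^ 2 := by
      intro ω; ring
    simp_rw [this]
    exact (hN2int.sub (hNint.const_mul _)).add (integrable_const _)
  have hM := mul_meas_ge_le_integral_of_nonneg (μ := P) (f := fun ω => (N ω - #S * p) ^ 2)
    (Filter.Eventually.of_forall fun ω => sq_nonneg _) hcint (t ^ 2)
  rw [le_div_iff₀ (by positivity), mul_comm]
  refine le_trans ?_ (hM.trans hvar)
  refine mul_le_mul_of_nonneg_left (measureReal_mono fun ω hω => ?_) (by positivity)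
  simp only [Set.mem_ofPred_eq] at hω ⊢
  nlinarith

lemma markov_count {Ω ι : Type*} [MeasurableSpace Ω] (P : Measure Ω) [IsProbabilityMeasure P]
    (S : Finset ι) (E : ι → Set Ω) (p : ℝ) (h1 : ∀ x ∈ S, P.real (E x) = p) :
    P.real (⋃ x ∈ S, E x) ≤ #S * p := by
  refine (measureReal_biUnion_finset_le S E).trans (le_of_eq ?_)
  rw [Finset.sum_congr rfl h1]; simp

/-! ### Systematic codes and their words -/

/-- The `j`-th row (counted from `0`) of the systematic matrix: a standard basis vector for `j < k`,
and `ω j` from then on. -/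
def sysRow (k : ℕ) (ω : ℕ → Fin k → ZMod 2) (j : ℕ) : Fin k → ZMod 2 :=
  if j < k then fun l => if (l : ℕ) = j then 1 else 0 else ω j

/-- The length-`n` codeword `G_n · m`. -/
def encode {k : ℕ} (ω : ℕ → Fin k → ZMod 2) (n : ℕ) (m : Fin k → ZMod 2) : Fin n → ZMod 2 :=
  fun j => ∑ l, sysRow k ω j l * m l

/-- The systematic part of a word: its first `k` coordinates. -/
def msg {k n : ℕ} (h : k ≤ n) (x : Fin n → ZMod 2) : Fin k → ZMod 2 :=
  fun l => x (Fin.castLE h l)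

/-- The event that the word `x` belongs to the code of length `n`: each parity row `j ∈ [k, n)`
must send the systematic part of `x` to `x j`. The `else` branch of the `dite` is never reached. -/
def codeEvent {k n : ℕ} (h : k ≤ n) (x : Fin n → ZMod 2) : Set (ℕ → Fin k → ZMod 2) :=
  {ω | ∀ j ∈ Finset.Ico k n,
    ∑ l, ω j l * msg h x l = if hj : j < n then x ⟨j, hj⟩ else 0}

lemma encode_of_lt {k n : ℕ} (ω : ℕ → Fin k → ZMod 2) (m : Fin k → ZMod 2) (j : Fin n)
    (hj : (j : ℕ) < k) : encode ω n m j = m ⟨j, hj⟩ := by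
  have : ∀ l : Fin k, ((l : ℕ) = j) ↔ l = ⟨j, hj⟩ := fun l => by simp [Fin.ext_iff]
  simp [encode, sysRow, hj, this]

lemma msg_encode {k n : ℕ} (h : k ≤ n) (ω : ℕ → Fin k → ZMod 2) (m : Fin k → ZMod 2) :
    msg h (encode ω n m) = m := by
  funext l
  exact encode_of_lt ω m (Fin.castLE h l) l.2

lemma encode_msg_eq_iff {k n : ℕ} (h : k ≤ n) (ω : ℕ → Fin k → ZMod 2) (x : Fin n → ZMod 2) :
    encode ω n (msg h x) = x ↔ ω ∈ codeEvent h x := by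
  constructor
  · intro hx j hj
    rw [Finset.mem_Ico] at hj
    have := congrFun hx ⟨j, hj.2⟩
    simpa [encode, sysRow, not_lt.mpr hj.1, hj.2] using this
  · intro hω
    funext j
    by_cases hj : (j : ℕ) < k
    · rw [encode_of_lt ω _ j hj]; rfl
    · have := hω j (Finset.mem_Ico.mpr ⟨not_lt.mp hj, j.2⟩)
      simpa [encode, sysRow, hj] using this

/-- The number of messages whose codeword has weight `i`. -/
def wcount {k : ℕ} (ω : ℕ → Fin k → ZMod 2) (n i : ℕ) : ℕ :=
  #{m : Fin k → ZMod 2 | wt (encode ω n m) = i}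

/-- The words of weight `i` and length `n` whose systematic part is nonzero. -/
def wordsOf {k n : ℕ} (h : k ≤ n) (i : ℕ) : Finset (Fin n → ZMod 2) :=
  {x | wt x = i ∧ msg h x ≠ 0}

lemma card_wt_le (n i : ℕ) : #{x : Fin n → ZMod 2 | wt x = i} ≤ n.choose i := by
  have : n.choose i = #(Finset.powersetCard i (univ : Finset (Fin n))) := by simp
  rw [this]
  refine Finset.card_le_card_of_injOn (fun x => univ.filter fun j => x j = 1) ?_ ?_
  · intro x hx
    have hx' : wt x = i := by simpa using hx
    simpa [wt, Finset.mem_powersetCard] using hx'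
  · intro x _ y _ hxy
    funext j
    have hj := Finset.ext_iff.mp hxy j
    simp only [Finset.mem_filter, Finset.mem_univ, true_and] at hj
    exact (by decide : ∀ u v : ZMod 2, (u = 1 ↔ v = 1) → u = v) _ _ hj

lemma wcount_le_choose {k n : ℕ} (h : k ≤ n) (ω : ℕ → Fin k → ZMod 2) (i : ℕ) :
    wcount ω n i ≤ n.choose i := by
  refine le_trans (Finset.card_le_card_of_injOn (encode ω n) ?_ ?_) (card_wt_le n i)
  · intro m hm; simpa using hm
  · intro m _ m' _ hmm
    rw [← msg_encode h ω m, ← msg_encode h ω m', hmm]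

lemma card_wordsOf_le {k n : ℕ} (h : k ≤ n) (i : ℕ) : #(wordsOf h i) ≤ n.choose i :=
  (Finset.card_le_card fun x hx => by simp only [wordsOf, mem_filter] at hx; simp [hx.2.1]).trans
    (card_wt_le n i)

/-- For `i > 0` the codewords of weight `i` are counted by the events `codeEvent h x`, since a
codeword is determined by its systematic part and the zero message has weight `0`. -/
lemma wcount_eq_sum {k n : ℕ} (h : k ≤ n) (ω : ℕ → Fin k → ZMod 2) {i : ℕ} (hi : 0 < i) :
    (wcount ω n i : ℝ) =
      ∑ x ∈ wordsOf h i, (codeEvent h x).indicator (1 : (ℕ → Fin k → ZMod 2) → ℝ) ω := by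
  classical
  have hcard : wcount ω n i = #{x ∈ wordsOf h i | ω ∈ codeEvent h x} := by
    refine Finset.card_bij' (fun m _ => encode ω n m) (fun x _ => msg h x) ?_ ?_ ?_ ?_
    · intro m hm
      simp only [mem_filter, mem_univ, true_and] at hm
      simp only [wordsOf, mem_filter, mem_univ, true_and, msg_encode, ← encode_msg_eq_iff,
        and_true]
      refine ⟨hm, ?_⟩
      rintro rfl
      have : wt (encode ω n 0) = 0 := by simp [wt, encode]
      omega
    · intro x hx
      simp only [wordsOf, mem_filter, mem_univ, true_and, ← encode_msg_eq_iff] at hx ⊢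
      rw [hx.2]; exact hx.1.1
    · intro m _; exact msg_encode h ω m
    · intro x hx
      exact (encode_msg_eq_iff h ω x).mpr (Finset.mem_filter.mp hx).2
  rw [hcard, Finset.card_filter]
  push_cast
  exact Finset.sum_congr rfl fun x _ => by simp [Set.indicator_apply]

/-! ### Probabilities of codeword events -/

lemma codeEvent_measurable {k n : ℕ} (h : k ≤ n) (x : Fin n → ZMod 2) :
    MeasurableSet (codeEvent h x) :=
  measurable_rowEvent (Finset.Ico k n)
    fun j r => ∑ l, r l * msg h x l = if hj : j < n then x ⟨j, hj⟩ else 0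

lemma codeEvent_prob {k n : ℕ} (h : k ≤ n) {x : Fin n → ZMod 2} (hx : msg h x ≠ 0) :
    (rowSeqMeasure k).real (codeEvent h x) = (1 / 2) ^ (n - k) := by
  have := rowSeq_real (c := 2) (Finset.Ico k n)
    (fun j r => ∑ l, r l * msg h x l = if hj : j < n then x ⟨j, hj⟩ else 0) two_pos
    (fun j => card_dot_eq hx _)
  rw [Nat.card_Ico] at this
  exact_mod_cast this

/-- Words with the same systematic part cannot both be codewords; words with different nonzero
systematic parts are codewords independently of each other. -/
lemma codeEvent_pair_prob {k n : ℕ} (h : k ≤ n) {x y : Fin n → ZMod 2} (hx : msg h x ≠ 0)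
    (hy : msg h y ≠ 0) (hxy : x ≠ y) :
    (rowSeqMeasure k).real (codeEvent h x ∩ codeEvent h y) ≤ ((1 / 2) ^ (n - k)) ^ 2 := by
  by_cases hm : msg h x = msg h y
  · have : codeEvent h x ∩ codeEvent h y = ∅ := by
      ext ω
      simp only [Set.mem_inter_iff, ← encode_msg_eq_iff, Set.mem_empty_iff_false, iff_false, not_and]
      intro h1 h2
      exact hxy (h1.symm.trans ((congrArg _ hm).trans h2))
    rw [this]
    simp only [measureReal_empty]
    positivity
  · have := rowSeq_real (c := 4) (Finset.Ico k n)
      (fun j r => (∑ l, r l * msg h x l = if hj : j < n then x ⟨j, hj⟩ else 0) ∧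
        ∑ l, r l * msg h y l = if hj : j < n then y ⟨j, hj⟩ else 0) four_pos
      (fun j => card_dot_pair_eq hx hy hm _ _)
    have hset : codeEvent h x ∩ codeEvent h y = {ω | ∀ j ∈ Finset.Ico k n,
        (∑ l, ω j l * msg h x l = if hj : j < n then x ⟨j, hj⟩ else 0) ∧
        ∑ l, ω j l * msg h y l = if hj : j < n then y ⟨j, hj⟩ else 0} := by
      ext ω
      simp only [codeEvent, Set.mem_inter_iff, Set.mem_ofPred_eq]
      exact ⟨fun H j hj => ⟨H.1 j hj, H.2 j hj⟩,
        fun H => ⟨fun j hj => (H j hj).1, fun j hj => (H j hj).2⟩⟩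
    rw [hset, this, ← pow_mul, mul_comm (n - k) 2, pow_mul]
    norm_num

/-! ### Bad events and the union bound -/

lemma exp_sqrt_gap {k n : ℕ} (hkn : k < n) :
    1 + 1 / (n : ℝ) ≤ Real.exp (2 * (Real.sqrt n - Real.sqrt k)) := by
  have hn : (1 : ℝ) ≤ n := by exact_mod_cast (by omega : 1 ≤ n)
  have hk1 : (k : ℝ) + 1 ≤ n := by exact_mod_cast hkn
  have hs := Real.sq_sqrt (by linarith : (0 : ℝ) ≤ n)
  have hsk := Real.sq_sqrt (Nat.cast_nonneg k : (0 : ℝ) ≤ k)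
  have h1 : 1 ≤ Real.sqrt n := Real.one_le_sqrt.mpr hn
  have h0 := Real.sqrt_nonneg (k : ℝ)
  have hle : Real.sqrt k ≤ Real.sqrt n := Real.sqrt_le_sqrt (by linarith)
  have hkey : 1 / (n : ℝ) ≤ 2 * (Real.sqrt n - Real.sqrt k) := by
    rw [div_le_iff₀ (by linarith)]
    set a := Real.sqrt n
    set b := Real.sqrt k
    rw [← hs]
    have : 1 ≤ (a - b) * (2 * a) := by nlinarith
    nlinarith [mul_le_mul_of_nonneg_left (by nlinarith : 2 * a ≤ 2 * a ^ 2) (sub_nonneg.mpr hle)]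
  linarith [Real.add_one_le_exp (2 * (Real.sqrt n - Real.sqrt k))]

/-- Second-moment bound. The factor `exp (2 (√n - √k)) ≥ 1 + 1 / n` makes the allowed deviation
from the mean at least `2 n⁴ + M / n` with `M = C(n,i) 2^{k-n}`, while the variance is at most `M`. -/
lemma prob_overweight {k n i : ℕ} (hkn : k < n) (hi : 0 < i) :
    (rowSeqMeasure k).real {ω | 2 * (n : ℝ) ^ 4 + (n.choose i : ℝ) * (1 / 2) ^ (n - k) *
      Real.exp (2 * (Real.sqrt n - Real.sqrt k)) < wcount ω n i} ≤ 1 / (8 * (n : ℝ) ^ 3) := by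
  have hn : (1 : ℝ) ≤ n := by exact_mod_cast (by omega : 1 ≤ n)
  set S := wordsOf hkn.le i
  set p : ℝ := (1 / 2) ^ (n - k)
  have hp : 0 < p := by positivity
  have hS : (#S : ℝ) * p ≤ n.choose i * p := by
    gcongr; exact card_wordsOf_le hkn.le i
  set M : ℝ := n.choose i * p
  have hM : 0 ≤ M := by positivity
  set t : ℝ := 2 * (n : ℝ) ^ 4 + M / n
  have ht : 0 < t := by positivity
  have hcheb := chebyshev_count (rowSeqMeasure k) S (codeEvent hkn.le)
    (fun x _ => codeEvent_measurable _ x) p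
    (fun x hx => codeEvent_prob _ (Finset.mem_filter.mp hx).2.2)
    (fun x hx y hy hxy => codeEvent_pair_prob _ (Finset.mem_filter.mp hx).2.2
      (Finset.mem_filter.mp hy).2.2 hxy) t ht
  refine (measureReal_mono fun ω hω => ?_).trans (hcheb.trans ?_)
  · simp only [Set.mem_ofPred_eq] at hω ⊢
    rw [← wcount_eq_sum hkn.le ω hi]
    have := mul_le_mul_of_nonneg_left (exp_sqrt_gap hkn) hM
    have h2 : M * (1 + 1 / n) = M + M / n := by ring
    linarith
  · have hamgm : 8 * (n : ℝ) ^ 3 * M ≤ t ^ 2 := by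
      -- `(u + v) ^ 2 ≥ 4 * u * v` with `u = 2 * n ^ 4` and `v = M / n`.
      have h1 : 4 * (2 * (n : ℝ) ^ 4) * (M / n) = 8 * (n : ℝ) ^ 3 * M := by
        field_simp; ring
      nlinarith [sq_nonneg (2 * (n : ℝ) ^ 4 - M / n)]
    rw [div_le_div_iff₀ (by positivity) (by positivity)]
    nlinarith [mul_le_mul_of_nonneg_right hS (by positivity : 0 ≤ 8 * (n : ℝ) ^ 3)]

/-- First-moment bound. The condition on `i` says `n ^ (55 i) ≤ 2 ^ (n - k)`, so the expected number
of codewords of weight `i` is at most `n ^ i / n ^ (55 i)`. -/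
lemma prob_lowWeight {k n i : ℕ} (hkn : k < n) (hn2 : 2 ≤ n) (hi : 0 < i)
    (hid : (i : ℝ) ≤ ((n : ℝ) - k) / (55 * Real.logb 2 n)) :
    (rowSeqMeasure k).real {ω | wcount ω n i ≠ 0} ≤ 1 / (8 * (n : ℝ) ^ 3) := by
  have hnR : (2 : ℝ) ≤ n := by exact_mod_cast hn2
  have hpow : (n : ℝ) ^ (55 * i) ≤ 2 ^ (n - k) := by
    have hlog : 0 < Real.logb 2 n := Real.logb_pos (by norm_num) (by linarith)
    rw [le_div_iff₀ (by positivity)] at hid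
    have h1 : (n : ℝ) = 2 ^ Real.logb 2 n :=
      (Real.rpow_logb (by norm_num) (by norm_num) (by linarith)).symm
    calc (n : ℝ) ^ (55 * i) = 2 ^ (Real.logb 2 n * ((55 * i : ℕ) : ℝ)) := by
          rw [Real.rpow_mul (by norm_num), ← h1, Real.rpow_natCast]
      _ ≤ (2 : ℝ) ^ (((n - k : ℕ) : ℝ)) := by
          refine Real.rpow_le_rpow_of_exponent_le (by norm_num) ?_
          rw [Nat.cast_sub hkn.le]; push_cast; linarith
      _ = _ := Real.rpow_natCast _ _
  have hsub : {ω : ℕ → Fin k → ZMod 2 | wcount ω n i ≠ 0}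
      ⊆ ⋃ x ∈ wordsOf hkn.le i, codeEvent hkn.le x := by
    intro ω hω
    by_contra hcon
    simp only [Set.mem_iUnion, not_exists] at hcon
    have := wcount_eq_sum hkn.le ω hi
    rw [Finset.sum_eq_zero fun x hx => Set.indicator_of_notMem (hcon x hx) _] at this
    exact hω (by exact_mod_cast this)
  refine (measureReal_mono hsub (measure_ne_top _ _)).trans ((markov_count (rowSeqMeasure k) _ _ ((1 / 2) ^ (n - k))
    (fun x hx => codeEvent_prob _ (Finset.mem_filter.mp hx).2.2)).trans ?_)
  have hc : (#(wordsOf hkn.le i) : ℝ) ≤ (n : ℝ) ^ i := by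
    exact_mod_cast (card_wordsOf_le hkn.le i).trans (Nat.choose_le_pow n i)
  have h8 : 8 * (n : ℝ) ^ 3 * n ^ i ≤ n ^ (55 * i) := by
    calc 8 * (n : ℝ) ^ 3 * n ^ i = 2 ^ 3 * (n : ℝ) ^ 3 * n ^ i := by norm_num
      _ ≤ n ^ 3 * (n : ℝ) ^ 3 * n ^ i := by gcongr
      _ = (n : ℝ) ^ (6 + i) := by ring
      _ ≤ (n : ℝ) ^ (55 * i) := pow_le_pow_right₀ (by linarith) (by omega)
  rw [one_div_pow, mul_one_div, div_le_div_iff₀ (by positivity) (by positivity)]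
  nlinarith [mul_le_mul_of_nonneg_right hc (by positivity : 0 ≤ 8 * (n : ℝ) ^ 3)]

/-- The row sequences violating the enumerator bound or the minimum-distance bound at length `n`
and weight `i`. -/
def badSet (k n i : ℕ) : Set (ℕ → Fin k → ZMod 2) :=
  {ω | (2 * (n : ℝ) ^ 4 + (n.choose i : ℝ) * (1 / 2) ^ (n - k) *
      Real.exp (2 * (Real.sqrt n - Real.sqrt k)) < wcount ω n i) ∨
    ((i : ℝ) ≤ ((n : ℝ) - k) / (55 * Real.logb 2 n) ∧ wcount ω n i ≠ 0)}

lemma prob_badSet {k n i : ℕ} (hkn : k < n) (hn2 : 2 ≤ n) (hi : 0 < i) :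
    (rowSeqMeasure k).real (badSet k n i) ≤ 1 / (4 * (n : ℝ) ^ 3) := by
  have hn : (0 : ℝ) < n := by exact_mod_cast (by omega : 0 < n)
  have hB : (rowSeqMeasure k).real {ω | (i : ℝ) ≤ ((n : ℝ) - k) / (55 * Real.logb 2 n) ∧
      wcount ω n i ≠ 0} ≤ 1 / (8 * (n : ℝ) ^ 3) := by
    by_cases hid : (i : ℝ) ≤ ((n : ℝ) - k) / (55 * Real.logb 2 n)
    · simpa only [hid, true_and] using prob_lowWeight hkn hn2 hi hid
    · simp only [hid, false_and, Set.ofPred_false, measureReal_empty]; positivity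
  have h := measureReal_union_le (μ := rowSeqMeasure k)
    {ω | 2 * (n : ℝ) ^ 4 + (n.choose i : ℝ) * (1 / 2) ^ (n - k) *
      Real.exp (2 * (Real.sqrt n - Real.sqrt k)) < wcount ω n i}
    {ω | (i : ℝ) ≤ ((n : ℝ) - k) / (55 * Real.logb 2 n) ∧ wcount ω n i ≠ 0}
  have hsum : 1 / (8 * (n : ℝ) ^ 3) + 1 / (8 * (n : ℝ) ^ 3) = 1 / (4 * (n : ℝ) ^ 3) := by
    field_simp; norm_num
  refine h.trans ?_
  rw [← hsum]
  exact add_le_add (prob_overweight hkn hi) hB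

/-- Union bound: summing `1 / (4 n³)` over `1 ≤ i ≤ n` and then over `n` gives at most
`π² / 24 < 1`. -/
lemma exists_good (k : ℕ) (hk : 1 ≤ k) : ∃ ω : ℕ → Fin k → ZMod 2,
    ∀ n i, k < n → 0 < i → i ≤ n → ω ∉ badSet k n i := by
  set B : ℕ → Set (ℕ → Fin k → ZMod 2) := fun n =>
    if k < n then ⋃ i ∈ Finset.Icc 1 n, badSet k n i else ∅ with hB
  have hBn : ∀ n, (rowSeqMeasure k) (B n) ≤ ENNReal.ofReal (1 / 4 * (1 / (n : ℝ) ^ 2)) := by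
    intro n
    by_cases hkn : k < n
    · have hn : (0 : ℝ) < n := by exact_mod_cast (by omega : 0 < n)
      rw [← ofReal_measureReal]
      refine ENNReal.ofReal_le_ofReal ?_
      simp only [hB, if_pos hkn]
      refine (measureReal_biUnion_finset_le _ _).trans ((Finset.sum_le_sum fun i hi =>
        prob_badSet hkn (by omega) (Finset.mem_Icc.mp hi).1).trans (le_of_eq ?_))
      simp only [Finset.sum_const, Nat.card_Icc, nsmul_eq_mul, Nat.add_sub_cancel]
      field_simp
    · simp [hB, hkn]
  have hs : HasSum (fun n : ℕ => 1 / 4 * (1 / (n : ℝ) ^ 2)) (1 / 4 * (Real.pi ^ 2 / 6)) :=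
    hasSum_zeta_two.mul_left _
  have hlt : rowSeqMeasure k (⋃ n, B n) < 1 := by
    refine (measure_iUnion_le B).trans_lt ((ENNReal.tsum_le_tsum hBn).trans_lt ?_)
    rw [← ENNReal.ofReal_tsum_of_nonneg (fun n => by positivity) hs.summable, hs.tsum_eq,
      ENNReal.ofReal_lt_one]
    nlinarith [Real.pi_lt_four, Real.pi_pos]
  have hne : (⋃ n, B n) ≠ Set.univ := by
    intro h
    rw [h, measure_univ] at hlt
    exact lt_irrefl _ hlt
  obtain ⟨ω, hω⟩ := (Set.ne_univ_iff_exists_notMem _).mp hne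
  refine ⟨ω, fun n i hkn hi hin hbad => hω (Set.mem_iUnion.mpr ⟨n, ?_⟩)⟩
  simp only [hB, if_pos hkn]
  exact Set.mem_biUnion (Finset.mem_coe.mpr (Finset.mem_Icc.mpr ⟨hi, hin⟩)) hbad

theorem stmt15 (k : ℕ) (hk : 1 ≤ k) :
    ∃ R : ℕ → (Fin k → ZMod 2),
      (∀ i : Fin k, R (i : ℕ) = fun j => if j = i then 1 else 0) ∧
      ∀ n : ℕ, max k 2 ≤ n →
        (∀ i : ℕ, 0 < i → (i : ℝ) ≤ ((n : ℝ) - (k : ℝ)) / (55 * Real.logb 2 n) →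
          (Finset.univ.filter fun m : Fin k → ZMod 2 =>
            wt (fun j : Fin n => ∑ l, R (j : ℕ) l * m l) = i).card = 0) ∧
        (∀ i : ℕ,
          ((Finset.univ.filter fun m : Fin k → ZMod 2 =>
            wt (fun j : Fin n => ∑ l, R (j : ℕ) l * m l) = i).card : ℝ) ≤
          2 * (n : ℝ) ^ 4 + (n.choose i : ℝ) * (2 : ℝ) ^ ((k : ℤ) - (n : ℤ)) *
            Real.exp (2 * (Real.sqrt n - Real.sqrt k))) := by
  obtain ⟨ω, hω⟩ := exists_good k hk
  refine ⟨sysRow k ω, fun i => ?_, fun n hn => ?_⟩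
  · simp [sysRow, Fin.ext_iff]
  have hkn : k ≤ n := (le_max_left _ _).trans hn
  have hn2 : 2 ≤ n := (le_max_right _ _).trans hn
  have hnR : (2 : ℝ) ≤ n := by exact_mod_cast hn2
  have hchoose : ∀ i, wcount ω n i ≤ n.choose i := wcount_le_choose hkn ω
  have hbig : ∀ i, n < i → wcount ω n i = 0 := fun i hi => by
    have := hchoose i
    rw [Nat.choose_eq_zero_of_lt hi] at this
    omega
  refine ⟨fun i hi hid => ?_, fun i => ?_⟩
  · change wcount ω n i = 0
    rcases hkn.eq_or_lt with rfl | hlt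
    · have : (0 : ℝ) < i := by exact_mod_cast hi
      simp only [sub_self, zero_div] at hid
      linarith
    by_cases hin : i ≤ n
    · by_contra hne
      exact hω n i hlt hi hin (Or.inr ⟨hid, hne⟩)
    · exact hbig i (by omega)
  · change (wcount ω n i : ℝ) ≤ _
    have hzpow : (2 : ℝ) ^ ((k : ℤ) - (n : ℤ)) = (1 / 2) ^ (n - k) := by
      rw [show (k : ℤ) - n = -((n - k : ℕ) : ℤ) by omega, zpow_neg, zpow_natCast, one_div_pow,
        one_div]
    rw [hzpow]
    have hc : (wcount ω n i : ℝ) ≤ n.choose i := by exact_mod_cast hchoose i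
    have hn4 : (1 : ℝ) ≤ (n : ℝ) ^ 4 := one_le_pow₀ (by linarith)
    rcases hkn.eq_or_lt with rfl | hlt
    · simp only [Nat.sub_self, pow_zero, sub_self, mul_zero, Real.exp_zero, mul_one]
      linarith
    have hpos : 0 ≤ (n.choose i : ℝ) * (1 / 2) ^ (n - k) *
        Real.exp (2 * (Real.sqrt n - Real.sqrt k)) := by positivity
    rcases Nat.eq_zero_or_pos i with rfl | hi
    · rw [Nat.choose_zero_right, Nat.cast_one] at hc
      linarith
    by_cases hin : i ≤ n
    · by_contra hgt
      exact hω n i hlt hi hin (Or.inl (not_le.mp hgt))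
    · rw [hbig i (by omega), Nat.cast_zero]
      linarith
end
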